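/- arXiv:1812.11213 — 10 statements merged into one kernel-verified Lean document; each statement's English description precedes it below -/
import Mathlib

section
/- Let L_0 ⊆ L_1 and M_0 ⊆ M_1 be subspaces of V. Then (L_1 ∩ M_0^⊥)^⊥ ∩ (L_0^⊥ ∩ M_1) = L_1^⊥ ∩ M_1 + L_0^⊥ ∩ M_0, and (L_1 ∩ M_0^⊥) ∩ (L_0^⊥ ∩ M_1)^⊥ = L_1 ∩ M_1^⊥ + L_0 ∩ M_0^⊥. -/
open Module

/-- The orthogonal complement of a subspace `L` with respect to a bilinear form `b`:
`L^⊥ = {v ∈ V | b(v,w) = 0 for all w ∈ L}`. -/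
def perp {K V : Type*} [Field K] [AddCommGroup V] [Module K V]
    (B : V →ₗ[K] V →ₗ[K] K) (L : Submodule K V) : Submodule K V where
  carrier := {v | ∀ w ∈ L, B v w = 0}
  add_mem' := by
    intro a b ha hb w hw
    simp [map_add, LinearMap.add_apply, ha w hw, hb w hw]
  zero_mem' := by
    intro w hw
    simp
  smul_mem' := by
    intro c a ha w hw
    simp [map_smul, LinearMap.smul_apply, ha w hw]

theorem perp_perp_aux {K V : Type*} [Field K] [AddCommGroup V] [Module K V]
    [FiniteDimensional K V] (B : V →ₗ[K] V →ₗ[K] K)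
    (hsymm : ∀ u v : V, B u v = B v u)
    (hnd : ∀ v : V, (∀ w : V, B v w = 0) → v = 0) (W : Submodule K V) :
    perp B (perp B W) = W := by
  have hp : ∀ U : Submodule K V, perp B U = LinearMap.BilinForm.orthogonal B U := by
    intro U
    ext v
    rw [LinearMap.BilinForm.mem_orthogonal_iff]
    constructor
    · intro h w hw
      exact (hsymm w v).trans (h w hw)
    · intro h w hw
      exact (hsymm v w).trans (h w hw)
  rw [hp, hp]
  apply LinearMap.BilinForm.orthogonal_orthogonal
  · exact ⟨hnd, fun v h => hnd v fun w => (hsymm v w).trans (h w)⟩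
  · intro u v h
    exact (hsymm v u).trans h

theorem perp_anti_aux {K V : Type*} [Field K] [AddCommGroup V] [Module K V]
    (B : V →ₗ[K] V →ₗ[K] K) {U W : Submodule K V} (h : U ≤ W) : perp B W ≤ perp B U :=
  fun _ hv w hw => hv w (h hw)

theorem half_aux {K V : Type*} [Field K] [AddCommGroup V] [Module K V]
    [FiniteDimensional K V] (B : V →ₗ[K] V →ₗ[K] K)
    (hsymm : ∀ u v : V, B u v = B v u)
    (hnd : ∀ v : V, (∀ w : V, B v w = 0) → v = 0)
    (L0 L1 M0 M1 : Submodule K V) (hL : L0 ≤ L1) (hM : M0 ≤ M1) :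
    perp B (L1 ⊓ perp B M0) ⊓ (perp B L0 ⊓ M1)
      = perp B L1 ⊓ M1 ⊔ perp B L0 ⊓ M0 := by
  have hpp := perp_perp_aux B hsymm hnd
  have key : perp B (L1 ⊓ perp B M0) = perp B L1 ⊔ M0 := by
    apply le_antisymm
    · rw [← hpp (perp B L1 ⊔ M0)]
      apply perp_anti_aux
      apply le_inf
      · have := perp_anti_aux B (le_sup_left : perp B L1 ≤ perp B L1 ⊔ M0)
        rwa [hpp] at this
      · exact perp_anti_aux B le_sup_right
    · apply sup_le
      · exact perp_anti_aux B inf_le_left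
      · have := perp_anti_aux B (inf_le_right : L1 ⊓ perp B M0 ≤ perp B M0)
        rwa [hpp] at this
  have hL' := perp_anti_aux B hL
  rw [key]
  apply le_antisymm
  · rintro v ⟨hv, hv0, hv1⟩
    obtain ⟨a, ha, m, hm, rfl⟩ := Submodule.mem_sup.1 hv
    refine Submodule.add_mem_sup ⟨ha, ?_⟩ ⟨?_, hm⟩
    · exact (Submodule.add_mem_iff_left M1 (hM hm)).1 hv1
    · exact (Submodule.add_mem_iff_right _ (hL' ha)).1 hv0
  · apply sup_le
    · exact le_inf (inf_le_left.trans le_sup_left) (inf_le_inf_right _ hL')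
    · exact le_inf (inf_le_right.trans le_sup_right) (inf_le_inf_left _ hM)

/-- For subspaces `L₀ ⊆ L₁` and `M₀ ⊆ M₁` of `V`,
`(L₁ ∩ M₀^⊥)^⊥ ∩ (L₀^⊥ ∩ M₁) = L₁^⊥ ∩ M₁ + L₀^⊥ ∩ M₀` and
`(L₁ ∩ M₀^⊥) ∩ (L₀^⊥ ∩ M₁)^⊥ = L₁ ∩ M₁^⊥ + L₀ ∩ M₀^⊥`. -/
theorem statement0 {K V : Type*} [Field K] [AddCommGroup V] [Module K V]
    [FiniteDimensional K V] [CharP K 2] [PerfectField K]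
    (B : V →ₗ[K] V →ₗ[K] K)
    (hsymm : ∀ u v : V, B u v = B v u)
    (hnd : ∀ v : V, (∀ w : V, B v w = 0) → v = 0)
    (L0 L1 M0 M1 : Submodule K V) (hL : L0 ≤ L1) (hM : M0 ≤ M1) :
    perp B (L1 ⊓ perp B M0) ⊓ (perp B L0 ⊓ M1)
      = perp B L1 ⊓ M1 ⊔ perp B L0 ⊓ M0 ∧
    (L1 ⊓ perp B M0) ⊓ perp B (perp B L0 ⊓ M1)
      = L1 ⊓ perp B M1 ⊔ L0 ⊓ perp B M0 := by
  refine ⟨half_aux B hsymm hnd L0 L1 M0 M1 hL hM, ?_⟩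
  have h := half_aux B hsymm hnd M0 M1 L0 L1 hM hL
  rw [inf_comm L1 (perp B M0), inf_comm (perp B L0) M1, inf_comm L1 (perp B M1),
    inf_comm L0 (perp B M0), inf_comm (perp B M0 ⊓ L1)]
  exact h
end

section
/- For every flag 𝓕 of V and all integers q, r ≥ 1, n_qr = n_rq, i.e. dim (V_q ∩ V_{r−1}^⊥)/(V_q ∩ V_r^⊥ + V_{q−1} ∩ V_{r−1}^⊥) = dim (V_r ∩ V_{q−1}^⊥)/(V_r ∩ V_q^⊥ + V_{r−1} ∩ V_{q−1}^⊥). -/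
open Module

/-- `n_qr`: the dimension of the quotient
`Φ_qr = (V_q ∩ V_{r−1}^⊥)/(V_q ∩ V_r^⊥ + V_{q−1} ∩ V_{r−1}^⊥)`. -/
noncomputable def nqr {K V : Type*} [Field K] [AddCommGroup V] [Module K V]
    (B : V →ₗ[K] V →ₗ[K] K) (Vf : ℕ → Submodule K V) (q r : ℕ) : ℕ :=
  Module.finrank K
    (↥(Vf q ⊓ perp B (Vf (r - 1))) ⧸
      Submodule.comap (Vf q ⊓ perp B (Vf (r - 1))).subtype
        (Vf q ⊓ perp B (Vf r) ⊔ Vf (q - 1) ⊓ perp B (Vf (r - 1))))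

lemma perp_eq_orth {K V : Type*} [Field K] [AddCommGroup V] [Module K V]
    (B : V →ₗ[K] V →ₗ[K] K) (hsymm : ∀ u v : V, B u v = B v u) (L : Submodule K V) :
    perp B L = LinearMap.BilinForm.orthogonal B L := by
  ext v
  constructor
  · intro h w hw
    have := h w hw
    rw [hsymm] at this
    exact this
  · intro h w hw
    rw [hsymm]
    exact h w hw

lemma key_dim {K V : Type*} [Field K] [AddCommGroup V] [Module K V]
    [FiniteDimensional K V]
    (B : V →ₗ[K] V →ₗ[K] K)
    (hsymm : ∀ u v : V, B u v = B v u)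
    (hnd : ∀ v : V, (∀ w : V, B v w = 0) → v = 0) (A C : Submodule K V) :
    finrank K ↥(A ⊓ perp B C) + finrank K C = finrank K ↥(C ⊓ perp B A) + finrank K A := by
  have hB : LinearMap.BilinForm.Nondegenerate B :=
    ⟨fun v h => hnd v h, fun v h => hnd v fun w => by rw [hsymm]; exact h w⟩
  have hrefl : LinearMap.BilinForm.IsRefl B := fun u v h => by rw [hsymm]; exact h
  have h1 := LinearMap.BilinForm.finrank_orthogonal hB C
  have h2 := LinearMap.BilinForm.finrank_orthogonal hB (A ⊔ perp B C)
  have h3 : LinearMap.BilinForm.orthogonal B (A ⊔ perp B C) = C ⊓ perp B A := by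
    have hcc := LinearMap.BilinForm.orthogonal_orthogonal hB hrefl C
    rw [← perp_eq_orth B hsymm, ← perp_eq_orth B hsymm] at hcc
    rw [← perp_eq_orth B hsymm]
    apply le_antisymm
    · intro v hv
      refine ⟨?_, fun w hw => hv w (Submodule.mem_sup_left hw)⟩
      rw [← hcc]
      exact fun w hw => hv w (Submodule.mem_sup_right hw)
    · rintro v ⟨hv, hv'⟩ w hw
      obtain ⟨x, hx, y, hy, rfl⟩ := Submodule.mem_sup.1 hw
      rw [map_add, hv' x hx, hsymm v y, hy v hv, add_zero]
  rw [h3] at h2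
  rw [← perp_eq_orth B hsymm] at h1
  have h4 := Submodule.finrank_sup_add_finrank_inf_eq A (perp B C)
  have h5 := Submodule.finrank_le C
  have h6 := Submodule.finrank_le (A ⊔ perp B C)
  omega

lemma nqr_dim {K V : Type*} [Field K] [AddCommGroup V] [Module K V]
    [FiniteDimensional K V]
    (B : V →ₗ[K] V →ₗ[K] K) (Vf : ℕ → Submodule K V) (hmono : Monotone Vf) (q r : ℕ) :
    nqr B Vf q r + finrank K ↥(Vf q ⊓ perp B (Vf r))
      + finrank K ↥(Vf (q - 1) ⊓ perp B (Vf (r - 1)))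
      = finrank K ↥(Vf q ⊓ perp B (Vf (r - 1))) + finrank K ↥(Vf (q - 1) ⊓ perp B (Vf r)) := by
  have hq : Vf (q - 1) ≤ Vf q := hmono (Nat.sub_le _ _)
  have hr : perp B (Vf r) ≤ perp B (Vf (r - 1)) :=
    fun v hv w hw => hv w (hmono (Nat.sub_le _ _) hw)
  have hle : Vf q ⊓ perp B (Vf r) ⊔ Vf (q - 1) ⊓ perp B (Vf (r - 1))
      ≤ Vf q ⊓ perp B (Vf (r - 1)) :=
    sup_le (inf_le_inf_left _ hr) (inf_le_inf_right _ hq)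
  have h1 := Submodule.finrank_quotient_add_finrank
    (Submodule.comap (Vf q ⊓ perp B (Vf (r - 1))).subtype
        (Vf q ⊓ perp B (Vf r) ⊔ Vf (q - 1) ⊓ perp B (Vf (r - 1))))
  rw [(Submodule.comapSubtypeEquivOfLe hle).finrank_eq] at h1
  have h2 := Submodule.finrank_sup_add_finrank_inf_eq (Vf q ⊓ perp B (Vf r))
    (Vf (q - 1) ⊓ perp B (Vf (r - 1)))
  have h3 : (Vf q ⊓ perp B (Vf r)) ⊓ (Vf (q - 1) ⊓ perp B (Vf (r - 1)))
      = Vf (q - 1) ⊓ perp B (Vf r) := by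
    rw [inf_inf_inf_comm, inf_eq_right.2 hq, inf_eq_left.2 hr]
  rw [h3] at h2
  unfold nqr
  omega

/-- for every flag of V and q, r ≥ 1, n_qr = n_rq. -/
theorem statement4 {K V : Type*} [Field K] [AddCommGroup V] [Module K V]
    [FiniteDimensional K V] [CharP K 2] [PerfectField K]
    (B : V →ₗ[K] V →ₗ[K] K)
    (hsymm : ∀ u v : V, B u v = B v u)
    (hnd : ∀ v : V, (∀ w : V, B v w = 0) → v = 0)
    (Vf : ℕ → Submodule K V) (hbot : Vf 0 = ⊥) (hmono : Monotone Vf)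
    (htop : ∃ N, ∀ q, N ≤ q → Vf q = ⊤)
    (q r : ℕ) (hq : 1 ≤ q) (hr : 1 ≤ r) :
    nqr B Vf q r = nqr B Vf r q := by
  have h1 := nqr_dim B Vf hmono q r
  have h2 := nqr_dim B Vf hmono r q
  have k := key_dim B hsymm hnd
  have k1 := k (Vf q) (Vf r)
  have k2 := k (Vf (q - 1)) (Vf (r - 1))
  have k3 := k (Vf q) (Vf (r - 1))
  have k4 := k (Vf (q - 1)) (Vf r)
  omega
end

section
/- If b is a non-alternating symmetric bilinear form on V, then V^0 = {v ∈ V | b(v,v) = 0} is a K-linear subspace of V of codimension 1 (a hyperplane). -/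
open Module

/-- if b is a non-alternating symmetric bilinear form on V
(over a perfect field of characteristic 2), then V^0 = {v | b(v,v) = 0}
is a K-linear subspace of V of codimension 1 (a hyperplane). -/
theorem statement5 {K V : Type*} [Field K] [AddCommGroup V] [Module K V]
    [FiniteDimensional K V] [CharP K 2] [PerfectField K]
    (B : V →ₗ[K] V →ₗ[K] K)
    (hsymm : ∀ u v : V, B u v = B v u)
    (hna : ∃ v : V, B v v ≠ 0) :
    ∃ H : Submodule K V, (∀ v : V, v ∈ H ↔ B v v = 0) ∧
      finrank K ↥H + 1 = finrank K V := by
  haveI : Fact (Nat.Prime 2) := ⟨Nat.prime_two⟩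
  haveI : ExpChar K 2 := ExpChar.prime Nat.prime_two
  haveI : PerfectRing K 2 := PerfectField.toPerfectRing 2
  have hex : ∀ v : V, ∃ x : K, x ^ 2 = B v v := fun v => by
    obtain ⟨x, hx⟩ := surjective_frobenius K 2 (B v v)
    exact ⟨x, by simpa [frobenius_def] using hx⟩
  choose f hf using hex
  have inj : ∀ x y : K, x ^ 2 = y ^ 2 → x = y := fun x y h =>
    frobenius_inj K 2 (by simpa [frobenius_def] using h)
  let g : V →ₗ[K] K :=
    { toFun := f
      map_add' := fun u v => by
        apply inj
        have h2 : (2 : K) = 0 := CharTwo.two_eq_zero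
        have := hsymm u v
        rw [hf, add_sq, hf, hf, h2]
        simp only [map_add, LinearMap.add_apply]
        linear_combination (-1 : K) * this + B u v * h2
      map_smul' := fun c v => by
        apply inj
        simp only [RingHom.id_apply, smul_eq_mul]
        rw [hf, mul_pow, hf]
        simp only [map_smul, LinearMap.smul_apply, smul_eq_mul]
        ring }
  have hg : ∀ v, g v ^ 2 = B v v := hf
  refine ⟨LinearMap.ker g, fun v => ?_, ?_⟩
  · rw [LinearMap.mem_ker, ← hg v]
    simp
  · obtain ⟨v, hv⟩ := hna
    have hg0 : g ≠ 0 := by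
      intro h
      apply hv
      rw [← hg v, h]
      simp
    have hr : LinearMap.range g = ⊤ :=
      LinearMap.range_eq_top.mpr (LinearMap.surjective hg0)
    have := LinearMap.finrank_range_add_finrank_ker g
    rw [hr, finrank_top, finrank_self] at this
    omega
end

section
/- For every flag 𝓕 of V and all integers q, r ≥ 1, the invariant n_qr^1 = n_qr − dim Φ_qr^0 can only be equal to 0 or 1; that is, Φ_qr^0 has codimension at most 1 in Φ_qr. -/
open Module

/-- `n_qr^1 = n_qr − dim Φ_qr^0`, where `Φ_qr^0` is the image of
`V_q ∩ V_{r−1}^⊥ ∩ V^0` under the canonical projection onto `Φ_qr`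
(`V0` is the subspace of isotropic vectors `{v | b(v,v) = 0}`). -/
noncomputable def nqr1 {K V : Type*} [Field K] [AddCommGroup V] [Module K V]
    (B : V →ₗ[K] V →ₗ[K] K) (Vf : ℕ → Submodule K V) (V0 : Submodule K V)
    (q r : ℕ) : ℕ :=
  nqr B Vf q r -
    Module.finrank K
      ↥(Submodule.map
        (Submodule.mkQ (Submodule.comap (Vf q ⊓ perp B (Vf (r - 1))).subtype
          (Vf q ⊓ perp B (Vf r) ⊔ Vf (q - 1) ⊓ perp B (Vf (r - 1)))))
        (Submodule.comap (Vf q ⊓ perp B (Vf (r - 1))).subtype V0))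

theorem codim_aux {K M : Type*} [Field K] [AddCommGroup M] [Module K M]
    [FiniteDimensional K M] (N S : Submodule K M) (a : M)
    (h : ∀ w : M, ∃ c : K, w - c • a ∈ S) :
    Module.finrank K (M ⧸ N) - Module.finrank K ↥(Submodule.map N.mkQ S) ≤ 1 := by
  have htop : Submodule.map N.mkQ S ⊔ Submodule.span K {N.mkQ a} = ⊤ := by
    rw [eq_top_iff]
    rintro x -
    obtain ⟨w, rfl⟩ := N.mkQ_surjective x
    obtain ⟨c, hc⟩ := h w
    have : N.mkQ w = N.mkQ (w - c • a) + c • N.mkQ a := by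
      rw [map_sub, map_smul, sub_add_cancel]
    rw [this]
    exact Submodule.add_mem_sup (Submodule.mem_map_of_mem hc)
      (Submodule.smul_mem _ _ (Submodule.mem_span_singleton_self _))
  have h1 := Submodule.finrank_add_le_finrank_add_finrank (Submodule.map N.mkQ S)
    (Submodule.span K {N.mkQ a})
  rw [htop, finrank_top] at h1
  have h2 : Module.finrank K ↥(Submodule.span K {N.mkQ a}) ≤ 1 := by
    have h3 := finrank_span_finset_le_card (R := K) ({N.mkQ a} : Finset (M ⧸ N))
    rw [Finset.card_singleton, Set.finrank, Finset.coe_singleton] at h3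
    exact h3
  omega

/-- for every flag of V and all q, r ≥ 1, the invariant
n_qr^1 = n_qr − dim Φ_qr^0 can only be 0 or 1. -/
theorem statement6 {K V : Type*} [Field K] [AddCommGroup V] [Module K V]
    [FiniteDimensional K V] [CharP K 2] [PerfectField K]
    (B : V →ₗ[K] V →ₗ[K] K)
    (hsymm : ∀ u v : V, B u v = B v u)
    (hnd : ∀ v : V, (∀ w : V, B v w = 0) → v = 0)
    (hna : ∃ v : V, B v v ≠ 0)
    (Vf : ℕ → Submodule K V) (hbot : Vf 0 = ⊥) (hmono : Monotone Vf)
    (htop : ∃ N, ∀ q, N ≤ q → Vf q = ⊤)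
    (V0 : Submodule K V) (hV0 : ∀ v : V, v ∈ V0 ↔ B v v = 0)
    (q r : ℕ) (hq : 1 ≤ q) (hr : 1 ≤ r) :
    nqr1 B Vf V0 q r = 0 ∨ nqr1 B Vf V0 q r = 1 := by
  suffices h : nqr1 B Vf V0 q r ≤ 1 by omega
  unfold nqr1 nqr
  by_cases hS : ∀ w : ↥(Vf q ⊓ perp B (Vf (r - 1))), (w : V) ∈ V0
  · apply codim_aux _ _ 0
    intro w
    refine ⟨0, ?_⟩
    simpa using hS w
  · push Not at hS
    obtain ⟨a, ha⟩ := hS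
    apply codim_aux _ _ a
    intro w
    have ha' : B (a : V) (a : V) ≠ 0 := fun h => ha ((hV0 _).2 h)
    haveI : Fact (Nat.Prime 2) := ⟨Nat.prime_two⟩
    haveI : ExpChar K 2 := ExpChar.prime Nat.prime_two
    haveI : PerfectRing K 2 := inferInstance
    obtain ⟨c, hc⟩ := surjective_frobenius K 2 (B (w : V) (w : V) / B (a : V) (a : V))
    rw [frobenius_def, eq_div_iff ha'] at hc
    refine ⟨c, ?_⟩
    change ((w - c • a : ↥(Vf q ⊓ perp B (Vf (r - 1)))) : V) ∈ V0
    rw [hV0]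
    have h2 : (2 : K) = 0 := CharTwo.two_eq_zero
    simp only [Submodule.coe_sub, Submodule.coe_smul, map_sub, map_smul, LinearMap.sub_apply,
      LinearMap.smul_apply, smul_eq_mul]
    rw [hsymm a w]
    linear_combination hc + (B (w : V) (w : V) - c * B (w : V) (a : V)) * h2
end

section
/- Suppose that for some integers q, r ≥ 1 either q ≠ r, or q = r and n_qq^1 = 0. If u ∈ V_q ∩ V_{r−1}^⊥, v ∈ V_r ∩ V_{q−1}^⊥, and b(u,v) = 1, then V = span{u,v} ⊕ (span{u,v})^⊥, this decomposition is coordinated with the flag 𝓕, and b(u,u)·b(v,v) = 0. -/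
open Module

/-- Lemma 1.1: suppose for some q, r ≥ 1 either q ≠ r, or q = r and
n_qq^1 = 0. If u ∈ V_q ∩ V_{r−1}^⊥, v ∈ V_r ∩ V_{q−1}^⊥ and b(u,v) = 1, then
V = span{u,v} ⊕ span{u,v}^⊥, this decomposition is coordinated with the flag,
and b(u,u)·b(v,v) = 0. -/
theorem statement7 {K V : Type*} [Field K] [AddCommGroup V] [Module K V]
    [FiniteDimensional K V] [CharP K 2] [PerfectField K]
    (B : V →ₗ[K] V →ₗ[K] K)
    (hsymm : ∀ u v : V, B u v = B v u)
    (hnd : ∀ v : V, (∀ w : V, B v w = 0) → v = 0)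
    (hna : ∃ v : V, B v v ≠ 0)
    (Vf : ℕ → Submodule K V) (hbot : Vf 0 = ⊥) (hmono : Monotone Vf)
    (htop : ∃ N, ∀ q, N ≤ q → Vf q = ⊤)
    (V0 : Submodule K V) (hV0 : ∀ v : V, v ∈ V0 ↔ B v v = 0)
    (q r : ℕ) (hq : 1 ≤ q) (hr : 1 ≤ r)
    (hcase : q ≠ r ∨ nqr1 B Vf V0 q q = 0)
    (u v : V)
    (hu : u ∈ Vf q ⊓ perp B (Vf (r - 1)))
    (hv : v ∈ Vf r ⊓ perp B (Vf (q - 1)))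
    (huv : B u v = 1) :
    IsCompl (Submodule.span K {u, v}) (perp B (Submodule.span K {u, v})) ∧
    (∀ j : ℕ, Vf j = Vf j ⊓ Submodule.span K {u, v}
        ⊔ Vf j ⊓ perp B (Submodule.span K {u, v})) ∧
    B u u * B v v = 0 := by
  have hself : ∀ {j k : ℕ} {x y : V}, j < k → x ∈ Vf j → y ∈ perp B (Vf (k - 1)) → B y x = 0 := by
    intro j k x y hjk hx hy
    exact hy x (hmono (by omega : j ≤ k - 1) hx)
  have hqr : q < r → B u u = 0 := fun h => hself h hu.1 hu.2
  have hrq : r < q → B v v = 0 := fun h => hself h hv.1 hv.2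
  have hprod : B u u * B v v = 0 := by
    rcases lt_trichotomy q r with h | h | h
    · simp [hqr h]
    · subst h
      have hn : nqr1 B Vf V0 q q = 0 := by
        rcases hcase with h | h
        · exact absurd rfl h
        · exact h
      unfold nqr1 nqr at hn
      have htopq := Submodule.eq_top_of_finrank_eq
        (le_antisymm (Submodule.finrank_le _) (Nat.sub_eq_zero_iff_le.mp hn))
      have hmem : Submodule.mkQ (Submodule.comap (Vf q ⊓ perp B (Vf (q - 1))).subtype
          (Vf q ⊓ perp B (Vf q) ⊔ Vf (q - 1) ⊓ perp B (Vf (q - 1)))) ⟨u, hu⟩ ∈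
          Submodule.map
        (Submodule.mkQ (Submodule.comap (Vf q ⊓ perp B (Vf (q - 1))).subtype
          (Vf q ⊓ perp B (Vf q) ⊔ Vf (q - 1) ⊓ perp B (Vf (q - 1)))))
        (Submodule.comap (Vf q ⊓ perp B (Vf (q - 1))).subtype V0) := by
        rw [htopq]; trivial
      obtain ⟨y, hy, hyu⟩ := hmem
      have hd := (Submodule.Quotient.eq _).mp hyu
      have hle : Vf q ⊓ perp B (Vf q) ⊔ Vf (q - 1) ⊓ perp B (Vf (q - 1)) ≤ V0 := by
        apply sup_le
        · intro x hx
          exact (hV0 x).2 (hx.2 x hx.1)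
        · intro x hx
          exact (hV0 x).2 (hx.2 x hx.1)
      have hd0 : (y : V) - u ∈ V0 := hle hd
      have hy0 : (y : V) ∈ V0 := hy
      have hu0 : u ∈ V0 := by
        have := V0.sub_mem hy0 hd0
        simpa using this
      rw [(hV0 u).1 hu0, zero_mul]
    · simp [hrq h]
  have hvu : B v u = 1 := by rw [hsymm, huv]
  have huS : u ∈ Submodule.span K {u, v} := Submodule.subset_span (by simp)
  have hvS : v ∈ Submodule.span K {u, v} := Submodule.subset_span (by simp)
  have hperp : ∀ x, B x u = 0 → B x v = 0 → x ∈ perp B (Submodule.span K {u, v}) := by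
    intro x h1 h2 w hw
    obtain ⟨a, b, rfl⟩ := Submodule.mem_span_pair.1 hw
    simp [h1, h2]
  have hres : ∀ x, x - ((B x v - B x u * B v v) • u + (B x u - B x v * B u u) • v) ∈
      perp B (Submodule.span K {u, v}) := by
    intro x
    apply hperp
    · simp only [map_sub, map_add, map_smul, LinearMap.sub_apply, LinearMap.add_apply,
        LinearMap.smul_apply, smul_eq_mul, hvu]
      linear_combination (B x u) * hprod
    · simp only [map_sub, map_add, map_smul, LinearMap.sub_apply, LinearMap.add_apply,
        LinearMap.smul_apply, smul_eq_mul, huv]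
      linear_combination (B x v) * hprod
  have hpS : ∀ x, ((B x v - B x u * B v v) • u + (B x u - B x v * B u u) • v) ∈
      Submodule.span K {u, v} := fun x =>
    Submodule.add_mem _ (Submodule.smul_mem _ _ huS) (Submodule.smul_mem _ _ hvS)
  refine ⟨⟨?_, ?_⟩, ?_, hprod⟩
  · rw [Submodule.disjoint_def]
    intro x hx hx2
    obtain ⟨a, b, rfl⟩ := Submodule.mem_span_pair.1 hx
    have h1 := hx2 u huS
    have h2 := hx2 v hvS
    simp only [map_add, map_smul, LinearMap.add_apply,
        LinearMap.smul_apply, smul_eq_mul, huv, hvu] at h1 h2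
    have ha : a = 0 := by linear_combination h2 - B v v * h1 + a * hprod
    have hb : b = 0 := by linear_combination h1 - B u u * h2 + b * hprod
    simp [ha, hb]
  · rw [codisjoint_iff_le_sup]
    intro x _
    exact Submodule.mem_sup.2 ⟨_, hpS x, _, hres x, by abel⟩
  · intro j
    apply le_antisymm
    · intro x hx
      have hxv : j < q → B x v = 0 := fun h => by
        rw [hsymm]; exact hself h hx hv.2
      have hxu : j < r → B x u = 0 := fun h => by
        rw [hsymm]; exact hself h hx hu.2
      have hp : ((B x v - B x u * B v v) • u + (B x u - B x v * B u u) • v) ∈ Vf j := by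
        rcases lt_or_ge j q with h1 | h1 <;> rcases lt_or_ge j r with h2 | h2
        · simp [hxv h1, hxu h2]
        · have hvj : v ∈ Vf j := hmono h2 hv.1
          simpa [hxv h1, hrq (by omega)] using (Vf j).smul_mem (B x u) hvj
        · have huj : u ∈ Vf j := hmono h1 hu.1
          simpa [hxu h2, hqr (by omega)] using (Vf j).smul_mem (B x v) huj
        · exact Submodule.add_mem _ (Submodule.smul_mem _ _ (hmono h1 hu.1))
            (Submodule.smul_mem _ _ (hmono h2 hv.1))
      exact Submodule.mem_sup.2 ⟨_, ⟨hp, hpS x⟩, _, ⟨Submodule.sub_mem _ hx hp, hres x⟩, by abel⟩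
    · exact sup_le inf_le_left inf_le_left
end

section
/- For every integer q ≥ 1, if n_qq^1 = 0, then every vector of V_q ∩ V_{q−1}^⊥ is isotropic, i.e. V_q ∩ V_{q−1}^⊥ ⊆ V^0. -/
open Module

/-- for every q ≥ 1, if n_qq^1 = 0, then every vector of
V_q ∩ V_{q−1}^⊥ is isotropic, i.e. V_q ∩ V_{q−1}^⊥ ⊆ V^0. -/
theorem statement8 {K V : Type*} [Field K] [AddCommGroup V] [Module K V]
    [FiniteDimensional K V] [CharP K 2] [PerfectField K]
    (B : V →ₗ[K] V →ₗ[K] K)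
    (hsymm : ∀ u v : V, B u v = B v u)
    (hnd : ∀ v : V, (∀ w : V, B v w = 0) → v = 0)
    (hna : ∃ v : V, B v v ≠ 0)
    (Vf : ℕ → Submodule K V) (hbot : Vf 0 = ⊥) (hmono : Monotone Vf)
    (htop : ∃ N, ∀ q, N ≤ q → Vf q = ⊤)
    (V0 : Submodule K V) (hV0 : ∀ v : V, v ∈ V0 ↔ B v v = 0)
    (q : ℕ) (hq : 1 ≤ q)
    (h1 : nqr1 B Vf V0 q q = 0) :
    Vf q ⊓ perp B (Vf (q - 1)) ≤ V0 := by
  unfold nqr1 nqr at h1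
  have h2 := Submodule.eq_top_of_finrank_eq
    (le_antisymm (Submodule.finrank_le _) (Nat.sub_eq_zero_iff_le.mp h1))
  intro x hx
  have h3 := h2.symm.le (Submodule.mem_top (x := Submodule.Quotient.mk ⟨x, hx⟩))
  obtain ⟨y, hy, hyx⟩ := h3
  have hs := (Submodule.Quotient.eq _).mp hyx
  rw [Submodule.mem_comap] at hs
  rw [SetLike.mem_coe, Submodule.mem_comap] at hy
  have hle : Vf q ⊓ perp B (Vf q) ⊔ Vf (q - 1) ⊓ perp B (Vf (q - 1)) ≤ V0 := by
    refine sup_le ?_ ?_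
    · rintro v ⟨hv, hv'⟩
      exact (hV0 v).2 (hv' v hv)
    · rintro v ⟨hv, hv'⟩
      exact (hV0 v).2 (hv' v hv)
  have h4 := V0.sub_mem hy (hle hs)
  simpa using h4
end

section
/- Let q ≥ 1 and let u ∈ V_q ∩ V_{q−1}^⊥ with b(u,u) = 1. Then V = span{u} ⊕ (span{u})^⊥ and this decomposition is coordinated with the flag 𝓕. -/
open Module

/-- Lemma 1.2: let q ≥ 1 and u ∈ V_q ∩ V_{q−1}^⊥ with b(u,u) = 1.
Then V = span{u} ⊕ span{u}^⊥ and this decomposition is coordinated with the flag. -/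
theorem statement9 {K V : Type*} [Field K] [AddCommGroup V] [Module K V]
    [FiniteDimensional K V] [CharP K 2] [PerfectField K]
    (B : V →ₗ[K] V →ₗ[K] K)
    (hsymm : ∀ u v : V, B u v = B v u)
    (hnd : ∀ v : V, (∀ w : V, B v w = 0) → v = 0)
    (hna : ∃ v : V, B v v ≠ 0)
    (Vf : ℕ → Submodule K V) (hbot : Vf 0 = ⊥) (hmono : Monotone Vf)
    (htop : ∃ N, ∀ q, N ≤ q → Vf q = ⊤)
    (q : ℕ) (hq : 1 ≤ q)
    (u : V) (hu : u ∈ Vf q ⊓ perp B (Vf (q - 1))) (huu : B u u = 1) :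
    IsCompl (Submodule.span K {u}) (perp B (Submodule.span K {u})) ∧
    ∀ j : ℕ, Vf j = Vf j ⊓ Submodule.span K {u}
        ⊔ Vf j ⊓ perp B (Submodule.span K {u}) := by
  have hmem : ∀ v : V, v ∈ perp B (Submodule.span K {u}) ↔ B v u = 0 := by
    intro v
    constructor
    · intro h
      exact h u (Submodule.mem_span_singleton_self u)
    · intro h w hw
      obtain ⟨c, rfl⟩ := Submodule.mem_span_singleton.mp hw
      simp [h]
  have hsub : ∀ v : V, v - B v u • u ∈ perp B (Submodule.span K {u}) := by
    intro v
    rw [hmem]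
    simp [huu]
  have hsp : ∀ c : K, c • u ∈ Submodule.span K {u} := fun c =>
    Submodule.smul_mem _ c (Submodule.mem_span_singleton_self u)
  refine ⟨⟨?_, ?_⟩, ?_⟩
  · rw [Submodule.disjoint_def]
    intro x hx hx'
    obtain ⟨c, rfl⟩ := Submodule.mem_span_singleton.mp hx
    rw [hmem] at hx'
    have hc : c = 0 := by simpa [huu] using hx'
    simp [hc]
  · rw [codisjoint_iff, eq_top_iff]
    intro v _
    exact Submodule.mem_sup.mpr ⟨B v u • u, hsp _, v - B v u • u, hsub v, by abel⟩
  · intro j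
    apply le_antisymm
    · intro v hv
      have hj : B v u • u ∈ Vf j := by
        by_cases h : q ≤ j
        · exact Submodule.smul_mem _ _ (hmono h hu.1)
        · have h0 : B v u = 0 := by
            rw [hsymm]
            exact hu.2 v (hmono (by omega : j ≤ q - 1) hv)
          simp [h0]
      exact Submodule.mem_sup.mpr ⟨B v u • u, ⟨hj, hsp _⟩, v - B v u • u,
        ⟨Submodule.sub_mem _ hv hj, hsub v⟩, by abel⟩
    · exact sup_le inf_le_left inf_le_left
end

section
/- There exists a basis e_1, …, e_n of V coordinated with the flag 𝓕 (i.e., for each j, the set of those e_i lying in V_j is a basis of V_j) such that the Gram matrix (b(e_i, e_j)) is block diagonal of the form diag(M_0, …, M_0, M_1, …, M_1, 1_s), where M_0 = [[0,1],[1,0]], M_1 = [[0,1],[1,1]], 1_s is the s×s identity matrix, the number of blocks M_1 equals Σ_{1≤q<r} n_qr·n_rq^1, and s = Σ_{q≥1} n_qq·n_qq^1. -/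
open Module

/-- The entries of the block-diagonal matrix diag(M₀,…,M₀,M₁,…,M₁,1ₛ)
with k blocks M₀ = [[0,1],[1,0]] (occupying indices < 2k),
t blocks M₁ = [[0,1],[1,1]] (occupying indices in [2k, 2k+2t)),
and an identity block on the remaining indices. -/
def gramPattern (K : Type*) [Field K] (k t : ℕ) {n : ℕ} (i j : Fin n) : K :=
  if i.val < 2 * k then
    (if (j.val = i.val + 1 ∧ i.val % 2 = 0) ∨ (i.val = j.val + 1 ∧ j.val % 2 = 0)
      then 1 else 0)
  else if i.val < 2 * k + 2 * t then
    (if (i = j ∧ i.val % 2 = 1) ∨ (j.val = i.val + 1 ∧ i.val % 2 = 0) ∨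
        (i.val = j.val + 1 ∧ j.val % 2 = 0) then 1 else 0)
  else if i = j then 1 else 0


set_option linter.all false

section Aux
variable {K V : Type*} [Field K] [AddCommGroup V] [Module K V]

/-- the subspace `F_a ∩ F_b^⊥` -/
def ZZ (B : V →ₗ[K] V →ₗ[K] K) (F : ℕ → Submodule K V) (a b : ℕ) : Submodule K V :=
  F a ⊓ perp B (F b)

/-- numerator -/
def XX (B : V →ₗ[K] V →ₗ[K] K) (F : ℕ → Submodule K V) (a b : ℕ) : Submodule K V :=
  F a ⊓ perp B (F (b - 1))

/-- denominator -/
def YY (B : V →ₗ[K] V →ₗ[K] K) (F : ℕ → Submodule K V) (a b : ℕ) : Submodule K V :=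
  F a ⊓ perp B (F b) ⊔ F (a - 1) ⊓ perp B (F (b - 1))

/-- corner cells -/
def Corner (B : V →ₗ[K] V →ₗ[K] K) (F : ℕ → Submodule K V) (a b : ℕ) : Prop :=
  (∀ y ∈ YY B F a b, B y y = 0) ∧ ∃ x ∈ XX B F a b, B x x ≠ 0

open Classical in
/-- The normal form data -/
structure Dec (B : V →ₗ[K] V →ₗ[K] K) (C : ℕ → ℕ → Prop) (N : ℕ) (F : ℕ → Submodule K V) where
  P : Type
  S : Type
  fP : Fintype P
  fS : Fintype S
  e : P → V
  f : P → V
  g : S → V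
  q : P → ℕ
  r : P → ℕ
  c : S → ℕ
  hq : ∀ p, 1 ≤ q p
  hqr : ∀ p, q p ≤ r p
  hr : ∀ p, r p ≤ N
  hc : ∀ s, 1 ≤ c s
  hcN : ∀ s, c s ≤ N
  ee : ∀ p p', B (e p) (e p') = 0
  ef : ∀ p p', B (e p) (f p') = if p = p' then 1 else 0
  ff : ∀ p p', B (f p) (f p') = if p = p' ∧ C (r p) (q p) then 1 else 0
  eg : ∀ p s, B (e p) (g s) = 0
  fg : ∀ p s, B (f p) (g s) = 0
  gg : ∀ s s', B (g s) (g s') = if s = s' then 1 else 0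
  hC : ∀ p, C (r p) (q p) → q p < r p
  hg : ∀ s, C (c s) (c s)
  he : ∀ p, e p ∈ F (q p)
  hf : ∀ p, f p ∈ F (r p)
  hgm : ∀ s, g s ∈ F (c s)
  hF : ∀ j, F j ≤ Submodule.span K ({x | ∃ p, q p ≤ j ∧ x = e p} ∪ {x | ∃ p, r p ≤ j ∧ x = f p} ∪
    {x | ∃ s, c s ≤ j ∧ x = g s})

lemma mem_perp {B : V →ₗ[K] V →ₗ[K] K} {L : Submodule K V} {x : V} :
    x ∈ perp B L ↔ ∀ w ∈ L, B x w = 0 := Iff.rfl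

lemma perp_anti {B : V →ₗ[K] V →ₗ[K] K} {L M : Submodule K V} (h : L ≤ M) :
    perp B M ≤ perp B L := fun _ hx w hw => hx w (h hw)

lemma exists_sq [CharP K 2] [PerfectField K] (a : K) : ∃ c : K, c * c = a := by
  haveI : Fact (Nat.Prime 2) := ⟨Nat.prime_two⟩
  haveI : ExpChar K 2 := ExpChar.prime Nat.prime_two
  haveI : PerfectRing K 2 := PerfectField.toPerfectRing 2
  obtain ⟨c, hc⟩ := surjective_frobenius K 2 a
  exact ⟨c, by rw [← hc, frobenius_def, sq]⟩

lemma sq_add [CharP K 2] {B : V →ₗ[K] V →ₗ[K] K} (hs : ∀ u v : V, B u v = B v u) (x y : V) (c : K) :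
    B (x + c • y) (x + c • y) = B x x + c * c * B y y := by
  have h2 : (2 : K) = 0 := CharTwo.two_eq_zero
  simp only [map_add, map_smul, LinearMap.add_apply, LinearMap.smul_apply, smul_eq_mul]
  rw [hs y x]
  linear_combination (c * B x y) * h2

variable [FiniteDimensional K V]

lemma perp_perp {B : V →ₗ[K] V →ₗ[K] K} (hs : ∀ u v : V, B u v = B v u)
    (hnd : ∀ v : V, (∀ w : V, B v w = 0) → v = 0) (L : Submodule K V) :
    perp B (perp B L) = L := by
  have hr : LinearMap.BilinForm.IsRefl B := fun x y h => by rw [hs]; exact h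
  have hn : LinearMap.BilinForm.Nondegenerate B :=
    ⟨fun v h => hnd v h, fun v h => hnd v (fun w => by rw [hs]; exact h w)⟩
  have h : ∀ M : Submodule K V, perp B M = LinearMap.BilinForm.orthogonal B M := by
    intro M; ext x
    rw [mem_perp, LinearMap.BilinForm.mem_orthogonal_iff]
    exact forall₂_congr fun w _ => by rw [hs]
  rw [h, h, LinearMap.BilinForm.orthogonal_orthogonal hn hr]

lemma perp_sup {B : V →ₗ[K] V →ₗ[K] K} (hs : ∀ u v : V, B u v = B v u) (L M : Submodule K V) :
    perp B (L ⊔ M) = perp B L ⊓ perp B M := by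
  apply le_antisymm
  · exact le_inf (perp_anti le_sup_left) (perp_anti le_sup_right)
  · rintro x ⟨h1, h2⟩ w hw
    obtain ⟨a, ha, b, hb, rfl⟩ := Submodule.mem_sup.1 hw
    rw [map_add, h1 a ha, h2 b hb, add_zero]

lemma perp_XX {B : V →ₗ[K] V →ₗ[K] K} (hs : ∀ u v : V, B u v = B v u)
    (hnd : ∀ v : V, (∀ w : V, B v w = 0) → v = 0) (L M : Submodule K V) :
    perp B (L ⊓ perp B M) = perp B L ⊔ M := by
  rw [← perp_perp hs hnd (perp B L ⊔ M), perp_sup hs, perp_perp hs hnd]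

lemma YY_le {B : V →ₗ[K] V →ₗ[K] K} {F : ℕ → Submodule K V} (hm : Monotone F) (a b : ℕ) :
    YY B F a b ≤ XX B F a b :=
  sup_le (inf_le_inf_left _ (perp_anti (hm (Nat.sub_le _ _))))
    (inf_le_inf_right _ (hm (Nat.sub_le _ _)))

lemma exists_pair {B : V →ₗ[K] V →ₗ[K] K} (hs : ∀ u v : V, B u v = B v u)
    (hnd : ∀ v : V, (∀ w : V, B v w = 0) → v = 0) {F : ℕ → Submodule K V} (hm : Monotone F)
    {a b : ℕ} {x : V} (hx : x ∈ XX B F a b) (hy : x ∉ YY B F a b) :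
    ∃ y ∈ XX B F b a, B x y = 1 := by
  by_contra! hcon
  have h0 : ∀ y ∈ XX B F b a, B x y = 0 := by
    intro y hy'
    by_contra h
    apply hcon ((B x y)⁻¹ • y) (Submodule.smul_mem _ _ hy')
    rw [map_smul, smul_eq_mul, inv_mul_cancel₀ h]
  have h1 : x ∈ perp B (F b) ⊔ F (a - 1) := by
    rw [← perp_XX hs hnd]; exact h0
  obtain ⟨u, hu, w, hw, rfl⟩ := Submodule.mem_sup.1 h1
  apply hy
  have hua : u ∈ F a := by
    have := (F a).sub_mem hx.1 (hm (Nat.sub_le _ _) hw)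
    simpa using this
  have hwb : w ∈ perp B (F (b - 1)) := by
    have := (perp B (F (b-1))).sub_mem hx.2 (perp_anti (hm (Nat.sub_le b 1)) hu)
    simpa using this
  exact Submodule.add_mem_sup ⟨hua, hu⟩ ⟨hw, hwb⟩

lemma XY_zero {B : V →ₗ[K] V →ₗ[K] K} (hs : ∀ u v : V, B u v = B v u)
    {F : ℕ → Submodule K V}
    {a b : ℕ} {x y : V} (hx : x ∈ XX B F a b) (hy : y ∈ YY B F b a) : B x y = 0 := by
  obtain ⟨u, hu, w, hw, rfl⟩ := Submodule.mem_sup.1 hy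
  rw [map_add, hx.2 w hw.1, hs, hu.2 x hx.1, add_zero]

lemma exists_cell {B : V →ₗ[K] V →ₗ[K] K} (hs : ∀ u v : V, B u v = B v u)
    {F : ℕ → Submodule K V} (hb : F 0 = ⊥) (hm : Monotone F) {N : ℕ}
    (hrad : ∀ x ∈ F N, (∀ y ∈ F N, B x y = 0) → x = 0)
    (hne : F N ≠ ⊥) : ∃ q r, 1 ≤ q ∧ q ≤ r ∧ r ≤ N ∧ ¬ XX B F q r ≤ YY B F q r := by
  classical
  have hex : ∃ q, F q ≠ ⊥ := ⟨N, hne⟩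
  obtain ⟨q, hq, hqm⟩ : ∃ q, F q ≠ ⊥ ∧ ∀ m < q, F m = ⊥ :=
    ⟨Nat.find hex, Nat.find_spec hex, fun m h => by simpa using Nat.find_min hex h⟩
  have hqN : q ≤ N := by
    by_contra h
    exact hne (hqm N (by omega))
  have hex2 : ∃ r, ¬ F q ≤ perp B (F r) := by
    refine ⟨N, fun h => hq ?_⟩
    rw [Submodule.eq_bot_iff]
    exact fun x hx => hrad x (hm hqN hx) (h hx)
  have hN2 : ¬ F q ≤ perp B (F N) := by
    intro h
    apply hq
    rw [Submodule.eq_bot_iff]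
    exact fun x hx => hrad x (hm hqN hx) (h hx)
  obtain ⟨r, hr, hrm⟩ : ∃ r, ¬ F q ≤ perp B (F r) ∧ ∀ m < r, F q ≤ perp B (F m) :=
    ⟨Nat.find hex2, Nat.find_spec hex2, fun m h => by simpa using Nat.find_min hex2 h⟩
  have hq1 : 1 ≤ q := by
    rcases Nat.eq_zero_or_pos q with h | h
    · exact absurd (h ▸ hb) hq
    · exact h
  have hFr : F r ≠ ⊥ := by
    intro h
    apply hr
    rw [h]
    intro x _ w hw
    rw [(Submodule.mem_bot K).1 hw, map_zero]
  have hqr : q ≤ r := by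
    by_contra h
    exact hFr (hqm r (by omega))
  have hrN : r ≤ N := by
    by_contra h
    exact hN2 (hrm N (by omega))
  refine ⟨q, r, hq1, hqr, hrN, fun h => hr ?_⟩
  have h1 : F (q-1) = ⊥ := hqm _ (by omega)
  have h2 : F q ≤ perp B (F (r-1)) := hrm _ (by omega)
  intro x hx
  have := h ⟨hx, h2 hx⟩
  rw [YY, h1, bot_inf_eq, sup_bot_eq] at this
  exact this.2

/-- Compatible projections -/
structure Proj (B : V →ₗ[K] V →ₗ[K] K) (F : ℕ → Submodule K V) (π : V →ₗ[K] V) : Prop where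
  symm : ∀ x y, B (π x) y = B x (π y)
  idem : ∀ x, π (π x) = π x
  pres : ∀ j, ∀ x ∈ F j, π x ∈ F j

section
variable {B : V →ₗ[K] V →ₗ[K] K} {F : ℕ → Submodule K V} {π : V →ₗ[K] V}

lemma Proj.ZZ (h : Proj B F π) (a b : ℕ) :
    (F a).map π ⊓ perp B ((F b).map π) = (F a ⊓ perp B (F b)).map π := by
  apply le_antisymm
  · rintro _ ⟨⟨x, hx, rfl⟩, h2⟩
    refine ⟨π x, ⟨h.pres _ _ hx, fun w hw => ?_⟩, h.idem x⟩
    rw [← h.idem, h.symm]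
    exact h2 _ ⟨w, hw, rfl⟩
  · rintro _ ⟨x, ⟨hx, h2⟩, rfl⟩
    refine ⟨⟨x, hx, rfl⟩, ?_⟩
    rintro _ ⟨w, hw, rfl⟩
    rw [h.symm, h.idem]
    exact h2 _ (h.pres _ _ hw)

lemma Proj.XX (h : Proj B F π) (a b : ℕ) :
    XX B (fun j => (F j).map π) a b = (XX B F a b).map π := h.ZZ _ _

lemma Proj.YY (h : Proj B F π) (a b : ℕ) :
    YY B (fun j => (F j).map π) a b = (YY B F a b).map π := by
  unfold _root_.YY
  rw [Submodule.map_sup, ← h.ZZ, ← h.ZZ]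

lemma Proj.map_le (h : Proj B F π) (j : ℕ) : (F j).map π ≤ F j := by
  rintro _ ⟨x, hx, rfl⟩
  exact h.pres _ _ hx

lemma Proj.XX_le (h : Proj B F π) (a b : ℕ) : (_root_.XX B F a b).map π ≤ _root_.XX B F a b := by
  rintro _ ⟨x, hx, rfl⟩
  refine ⟨h.pres _ _ hx.1, fun w hw => ?_⟩
  rw [h.symm]
  exact hx.2 _ (h.pres _ _ hw)

lemma Proj.YY_le (h : Proj B F π) (a b : ℕ) : (_root_.YY B F a b).map π ≤ _root_.YY B F a b := by
  have key : ∀ c d, (F c ⊓ perp B (F d)).map π ≤ F c ⊓ perp B (F d) := by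
    rintro c d _ ⟨x, hx, rfl⟩
    refine ⟨h.pres _ _ hx.1, fun w hw => ?_⟩
    rw [h.symm]
    exact hx.2 _ (h.pres _ _ hw)
  unfold _root_.YY
  rw [Submodule.map_sup]
  exact sup_le_sup (key _ _) (key _ _)
end
end Aux
section Aux2
variable {K V : Type*} [Field K] [AddCommGroup V] [Module K V]

/-- projection along a plane -/
def pproj (B : V →ₗ[K] V →ₗ[K] K) (e f : V) (ε : K) : V →ₗ[K] V :=
  LinearMap.id - (B.flip f - ε • B.flip e).smulRight e - (B.flip e).smulRight f

/-- projection along a line -/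
def lproj (B : V →ₗ[K] V →ₗ[K] K) (w : V) : V →ₗ[K] V :=
  LinearMap.id - (B.flip w).smulRight w

lemma pproj_apply (B : V →ₗ[K] V →ₗ[K] K) (e f : V) (ε : K) (x : V) :
    pproj B e f ε x = x - (B x f - ε * B x e) • e - (B x e) • f := by
  simp [pproj]

lemma lproj_apply (B : V →ₗ[K] V →ₗ[K] K) (w : V) (x : V) :
    lproj B w x = x - (B x w) • w := by
  simp [lproj]

section
variable [FiniteDimensional K V] {B : V →ₗ[K] V →ₗ[K] K} (hs : ∀ u v : V, B u v = B v u) {F : ℕ → Submodule K V}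
  {e f : V} {ε : K}
include hs

lemma pproj_e (he : B e e = 0) (hef : B e f = 1) (hf : B f f = ε) (x : V) :
    B (pproj B e f ε x) e = 0 := by
  rw [pproj_apply]
  simp only [map_sub, map_smul, LinearMap.sub_apply, LinearMap.smul_apply, smul_eq_mul, he, hs f e,
    hef]
  ring

lemma pproj_f (he : B e e = 0) (hef : B e f = 1) (hf : B f f = ε) (x : V) :
    B (pproj B e f ε x) f = 0 := by
  rw [pproj_apply]
  simp only [map_sub, map_smul, LinearMap.sub_apply, LinearMap.smul_apply, smul_eq_mul, hf, hef]
  ring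

lemma pproj_proj (hm : Monotone F) {q r : ℕ} (hqr : q ≤ r) (heX : e ∈ XX B F q r)
    (hfX : f ∈ XX B F r q)
    (he : B e e = 0) (hef : B e f = 1) (hf : B f f = ε) : Proj B F (pproj B e f ε) where
  symm x y := by
    rw [pproj_apply, pproj_apply]
    simp only [map_sub, map_smul, LinearMap.sub_apply, LinearMap.smul_apply, smul_eq_mul, hs e y,
      hs f y]
    ring
  idem x := by
    conv_lhs => rw [pproj_apply]
    rw [pproj_e hs he hef hf, pproj_f hs he hef hf]
    simp
  pres j x hx := by
    rw [pproj_apply]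
    have h1 : (B x f - ε * B x e) • e ∈ F j := by
      by_cases h : q ≤ j
      · exact Submodule.smul_mem _ _ (hm h heX.1)
      · rw [hs x f, hs x e, hfX.2 x (hm (by omega) hx), heX.2 x (hm (by omega) hx)]
        simp
    have h2 : (B x e) • f ∈ F j := by
      by_cases h : r ≤ j
      · exact Submodule.smul_mem _ _ (hm h hfX.1)
      · rw [hs x e, heX.2 x (hm (by omega) hx)]
        simp
    exact Submodule.sub_mem _ (Submodule.sub_mem _ hx h1) h2

lemma pproj_sq [CharP K 2] (he : B e e = 0) (hef : B e f = 1) (hf : B f f = ε) (x : V) :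
    B (pproj B e f ε x) (pproj B e f ε x) = B x x + ε * (B x e * B x e) := by
  have h2 : (2 : K) = 0 := CharTwo.two_eq_zero
  nth_rw 2 [pproj_apply]
  simp only [map_sub, map_smul, smul_eq_mul, pproj_e hs he hef hf, pproj_f hs he hef hf]
  rw [pproj_apply]
  simp only [map_sub, map_smul, LinearMap.sub_apply, LinearMap.smul_apply, smul_eq_mul, hs e x,
    hs f x]
  linear_combination (-(B x f * B x e)) * h2

lemma lproj_w (he : B e e = 1) (x : V) : B (lproj B e x) e = 0 := by
  rw [lproj_apply]
  simp [he]

lemma lproj_proj (hm : Monotone F) {q : ℕ} (heX : e ∈ XX B F q q)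
    (he : B e e = 1) : Proj B F (lproj B e) where
  symm x y := by
    rw [lproj_apply, lproj_apply]
    simp only [map_sub, map_smul, LinearMap.sub_apply, LinearMap.smul_apply, smul_eq_mul, hs e y]
    ring
  idem x := by
    conv_lhs => rw [lproj_apply]
    rw [lproj_w hs he]
    simp
  pres j x hx := by
    rw [lproj_apply]
    have h1 : (B x e) • e ∈ F j := by
      by_cases h : q ≤ j
      · exact Submodule.smul_mem _ _ (hm h heX.1)
      · rw [hs x e, heX.2 x (hm (by omega) hx)]
        simp
    exact Submodule.sub_mem _ hx h1

lemma lproj_sq [CharP K 2] (he : B e e = 1) (x : V) :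
    B (lproj B e x) (lproj B e x) = B x x + B x e * B x e := by
  have h2 : (2 : K) = 0 := CharTwo.two_eq_zero
  nth_rw 2 [lproj_apply]
  simp only [map_sub, map_smul, smul_eq_mul, lproj_w hs he]
  rw [lproj_apply]
  simp only [map_sub, map_smul, LinearMap.sub_apply, LinearMap.smul_apply, smul_eq_mul, hs e x]
  linear_combination (-(B x e * B x e)) * h2

open Classical in
lemma Dec.pair {C : ℕ → ℕ → Prop} {N : ℕ} (hm : Monotone F) {q r : ℕ} (hq : 1 ≤ q) (hqr : q ≤ r)
    (hr : r ≤ N)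
    (heX : e ∈ XX B F q r) (hfX : f ∈ XX B F r q)
    (he : B e e = 0) (hef : B e f = 1) (hf : B f f = ε)
    (hε : ε = if C r q then 1 else 0) (hC : C r q → q < r)
    (D : Dec B C N (fun j => (F j).map (pproj B e f ε))) : Nonempty (Dec B C N F) := by
  have hP := pproj_proj hs hm hqr heX hfX he hef hf
  have oe : ∀ j, ∀ x ∈ (F j).map (pproj B e f ε), B x e = 0 := by
    rintro j _ ⟨x, _, rfl⟩; exact pproj_e hs he hef hf x
  have of : ∀ j, ∀ x ∈ (F j).map (pproj B e f ε), B x f = 0 := by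
    rintro j _ ⟨x, _, rfl⟩; exact pproj_f hs he hef hf x
  have e1 := fun p => oe _ _ (D.he p)
  have e2 := fun p => oe _ _ (D.hf p)
  have e3 := fun p => oe _ _ (D.hgm p)
  have f1 := fun p => of _ _ (D.he p)
  have f2 := fun p => of _ _ (D.hf p)
  have f3 := fun p => of _ _ (D.hgm p)
  have e1' := fun p => (hs _ _).trans (oe _ _ (D.he p))
  have e2' := fun p => (hs _ _).trans (oe _ _ (D.hf p))
  have e3' := fun p => (hs _ _).trans (oe _ _ (D.hgm p))
  have f1' := fun p => (hs _ _).trans (of _ _ (D.he p))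
  have f2' := fun p => (hs _ _).trans (of _ _ (D.hf p))
  have f3' := fun p => (hs _ _).trans (of _ _ (D.hgm p))
  have := D.fP
  have := D.fS
  refine ⟨⟨Option D.P, D.S, inferInstance, D.fS, fun o => o.elim e D.e, fun o => o.elim f D.f, D.g,
    fun o => o.elim q D.q, fun o => o.elim r D.r, D.c, ?_, ?_, ?_, D.hc, D.hcN, ?_, ?_, ?_, ?_, ?_,
    D.gg, ?_, D.hg, ?_, ?_, ?_, ?_⟩⟩
  · rintro (_ | p); exacts [hq, D.hq p]
  · rintro (_ | p); exacts [hqr, D.hqr p]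
  · rintro (_ | p); exacts [hr, D.hr p]
  · rintro (_ | p) (_ | p')
    exacts [he, e1' p', e1 p, D.ee p p']
  · rintro (_ | p) (_ | p')
    · simpa using hef
    · simpa using e2' p'
    · simpa using f1 p
    · simpa using D.ef p p'
  · rintro (_ | p) (_ | p')
    · simpa [← hε] using hf
    · simpa using f2' p'
    · simpa using f2 p
    · simpa using D.ff p p'
  · rintro (_ | p) s
    exacts [e3' s, D.eg p s]
  · rintro (_ | p) s
    exacts [f3' s, D.fg p s]
  · rintro (_ | p); exacts [hC, D.hC p]
  · rintro (_ | p); exacts [heX.1, hP.map_le _ (D.he p)]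
  · rintro (_ | p); exacts [hfX.1, hP.map_le _ (D.hf p)]
  · intro s; exact hP.map_le _ (D.hgm s)
  · intro j x hx
    have hx' : x = pproj B e f ε x + (B x f - ε * B x e) • e + (B x e) • f := by
      rw [pproj_apply]; abel
    rw [hx']
    refine Submodule.add_mem _ (Submodule.add_mem _ ?_ ?_) ?_
    · refine Submodule.span_mono ?_ (D.hF j ⟨x, hx, rfl⟩)
      refine Set.union_subset_union (Set.union_subset_union ?_ ?_) (le_refl _)
      · rintro _ ⟨p, hp, rfl⟩; exact ⟨some p, hp, rfl⟩
      · rintro _ ⟨p, hp, rfl⟩; exact ⟨some p, hp, rfl⟩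
    · by_cases h : q ≤ j
      · exact Submodule.smul_mem _ _ (Submodule.subset_span (Or.inl (Or.inl ⟨none, h, rfl⟩)))
      · rw [hs x f, hs x e, hfX.2 x (hm (by omega) hx), heX.2 x (hm (by omega) hx)]
        simp
    · by_cases h : r ≤ j
      · exact Submodule.smul_mem _ _ (Submodule.subset_span (Or.inl (Or.inr ⟨none, h, rfl⟩)))
      · rw [hs x e, heX.2 x (hm (by omega) hx)]
        simp

open Classical in
lemma Dec.line {C : ℕ → ℕ → Prop} {N : ℕ} (hm : Monotone F) {q : ℕ} (hq : 1 ≤ q)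
    (hr : q ≤ N)
    (heX : e ∈ XX B F q q) (he : B e e = 1) (hC : C q q)
    (D : Dec B C N (fun j => (F j).map (lproj B e))) : Nonempty (Dec B C N F) := by
  have hP := lproj_proj hs hm heX he
  have oe : ∀ j, ∀ x ∈ (F j).map (lproj B e), B x e = 0 := by
    rintro j _ ⟨x, _, rfl⟩; exact lproj_w hs he x
  have e1 := fun p => oe _ _ (D.he p)
  have e2 := fun p => oe _ _ (D.hf p)
  have e3 := fun p => oe _ _ (D.hgm p)
  have e3' := fun p => (hs _ _).trans (oe _ _ (D.hgm p))
  have := D.fP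
  have := D.fS
  refine ⟨⟨D.P, Option D.S, D.fP, inferInstance, D.e, D.f, fun o => o.elim e D.g,
    D.q, D.r, fun o => o.elim q D.c, D.hq, D.hqr, D.hr, ?_, ?_, D.ee, D.ef, D.ff, ?_, ?_, ?_, D.hC,
    ?_, ?_, ?_, ?_, ?_⟩⟩
  · rintro (_ | p); exacts [hq, D.hc p]
  · rintro (_ | p); exacts [hr, D.hcN p]
  · rintro p (_ | s)
    exacts [e1 p, D.eg p s]
  · rintro p (_ | s)
    exacts [e2 p, D.fg p s]
  · rintro (_ | p) (_ | p')
    · simpa using he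
    · simpa using e3' p'
    · simpa using e3 p
    · simpa using D.gg p p'
  · rintro (_ | p); exacts [hC, D.hg p]
  · intro p; exact hP.map_le _ (D.he p)
  · intro s; exact hP.map_le _ (D.hf s)
  · rintro (_ | p); exacts [heX.1, hP.map_le _ (D.hgm p)]
  · intro j x hx
    have hx' : x = lproj B e x + (B x e) • e := by
      rw [lproj_apply]; abel
    rw [hx']
    refine Submodule.add_mem _ ?_ ?_
    · refine Submodule.span_mono ?_ (D.hF j ⟨x, hx, rfl⟩)
      refine Set.union_subset_union (le_refl _) ?_
      · rintro _ ⟨p, hp, rfl⟩; exact ⟨some p, hp, rfl⟩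
    · by_cases h : q ≤ j
      · exact Submodule.smul_mem _ _ (Submodule.subset_span (Or.inr ⟨none, h, rfl⟩))
      · rw [hs x e, heX.2 x (hm (by omega) hx)]
        simp
end
end Aux2
section Aux3
variable {K V : Type*} [Field K] [AddCommGroup V] [Module K V] [FiniteDimensional K V]

/-- admissible chains -/
structure Adm (B : V →ₗ[K] V →ₗ[K] K) (N : ℕ) (C : ℕ → ℕ → Prop) (F : ℕ → Submodule K V) :
    Prop where
  bot : F 0 = ⊥
  mono : Monotone F
  le : ∀ j, F j ≤ F N
  rad : ∀ x ∈ F N, (∀ y ∈ F N, B x y = 0) → x = 0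
  inv : ∀ q r, 1 ≤ q → q ≤ r → r ≤ N → ¬ XX B F q r ≤ YY B F q r → (Corner B F r q ↔ C r q)

lemma Adm.map {B : V →ₗ[K] V →ₗ[K] K} {N : ℕ} {C : ℕ → ℕ → Prop} {F : ℕ → Submodule K V}
    (h : Adm B N C F) {π : V →ₗ[K] V} (hP : Proj B F π)
    (hc : ∀ q r, 1 ≤ q → q ≤ r → r ≤ N → ¬ XX B F q r ≤ YY B F q r →
      ¬ (XX B F q r).map π ≤ (YY B F q r).map π →
      (Corner B (fun j => (F j).map π) r q ↔ Corner B F r q)) :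
    Adm B N C (fun j => (F j).map π) where
  bot := by simp [h.bot]
  mono := fun i j hij => Submodule.map_mono (h.mono hij)
  le j := Submodule.map_mono (h.le j)
  rad := by
    rintro _ ⟨x, hx, rfl⟩ hy
    apply h.rad _ (hP.pres _ _ hx)
    intro y hy'
    rw [← hP.idem, hP.symm]
    exact hy _ ⟨y, hy', rfl⟩
  inv q r h1 h2 h3 h4 := by
    rw [hP.XX, hP.YY] at h4
    have h5 : ¬ XX B F q r ≤ YY B F q r := fun h => h4 (Submodule.map_mono h)
    rw [hc q r h1 h2 h3 h5 h4, h.inv q r h1 h2 h3 h5]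

lemma corner_map {B : V →ₗ[K] V →ₗ[K] K} {F : ℕ → Submodule K V}
    {π : V →ₗ[K] V} (hP : Proj B F π) {a b : ℕ} (h : Corner B F a b)
    (hx : ∃ x ∈ XX B F a b, B (π x) (π x) ≠ 0) : Corner B (fun j => (F j).map π) a b := by
  refine ⟨?_, ?_⟩
  · rw [hP.YY]
    intro y hy
    exact h.1 y (hP.YY_le _ _ hy)
  · rw [hP.XX]
    obtain ⟨x, hx, h'⟩ := hx
    exact ⟨π x, ⟨x, hx, rfl⟩, h'⟩

lemma corner_map_iff {B : V →ₗ[K] V →ₗ[K] K} {F : ℕ → Submodule K V}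
    {π : V →ₗ[K] V} (hP : Proj B F π) (hsq : ∀ x, B (π x) (π x) = B x x) (a b : ℕ) :
    Corner B (fun j => (F j).map π) a b ↔ Corner B F a b := by
  unfold Corner
  rw [hP.XX, hP.YY]
  simp [Submodule.mem_map, hsq]

lemma finrank_map_lt {B : V →ₗ[K] V →ₗ[K] K} {F : ℕ → Submodule K V}
    {π : V →ₗ[K] V} (hP : Proj B F π) {N : ℕ} {e f : V} (he : e ∈ F N) (hef : B e f ≠ 0)
    (hf : ∀ x, B (π x) f = 0) :
    finrank K ((F N).map π) < finrank K (F N) := by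
  apply Submodule.finrank_lt_finrank_of_lt
  refine lt_of_le_of_ne (hP.map_le N) fun h => ?_
  rw [← h] at he
  obtain ⟨x, _, rfl⟩ := he
  exact hef (hf x)

lemma mem_YY_of {B : V →ₗ[K] V →ₗ[K] K} {F : ℕ → Submodule K V} (hm : Monotone F) {q r a b : ℕ}
    {f : V} (hf : f ∈ XX B F r q) (ha : r ≤ a) (hb : b ≤ q) (hne : ¬ (a = r ∧ b = q)) :
    f ∈ YY B F a b := by
  by_cases h : a = r
  · exact Submodule.mem_sup_left ⟨hm ha hf.1, perp_anti (hm (by omega)) hf.2⟩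
  · exact Submodule.mem_sup_right ⟨hm (by omega) hf.1, perp_anti (hm (by omega)) hf.2⟩

lemma YY_diag {B : V →ₗ[K] V →ₗ[K] K} (hs : ∀ u v : V, B u v = B v u)
    {F : ℕ → Submodule K V} (hm : Monotone F) (q : ℕ) (y : V) (hy : y ∈ YY B F q q) :
    B y y = 0 := XY_zero hs (YY_le hm q q hy) hy

lemma main_dec [CharP K 2] [PerfectField K] {B : V →ₗ[K] V →ₗ[K] K}
    (hs : ∀ u v : V, B u v = B v u)
    (hnd : ∀ v : V, (∀ w : V, B v w = 0) → v = 0) (N : ℕ) (C : ℕ → ℕ → Prop) (n : ℕ) :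
    ∀ F : ℕ → Submodule K V, Adm B N C F → finrank K (F N) = n → Nonempty (Dec B C N F) := by
  classical
  have h2 : (2 : K) = 0 := CharTwo.two_eq_zero
  induction n using Nat.strong_induction_on with
  | _ n ih =>
  intro F hA hn
  have hm := hA.mono
  by_cases hbot : F N = ⊥
  · refine ⟨⟨Empty, Empty, inferInstance, inferInstance, fun x => x.elim, fun x => x.elim,
      fun x => x.elim, fun x => x.elim, fun x => x.elim, fun x => x.elim, fun x => x.elim,
      fun x => x.elim, fun x => x.elim, fun x => x.elim, fun x => x.elim, fun x => x.elim,
      fun x => x.elim, fun x => x.elim, fun x => x.elim, fun x => x.elim, fun x => x.elim,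
      fun x => x.elim, fun x => x.elim, fun x => x.elim, fun x => x.elim, fun x => x.elim,
      fun j => ?_⟩⟩
    exact ((hA.le j).trans hbot.le).trans bot_le
  by_cases hcase : ∃ q r, 1 ≤ q ∧ q ≤ r ∧ r ≤ N ∧ ¬ XX B F q r ≤ YY B F q r ∧ ¬ Corner B F r q
  · obtain ⟨q, r, hq, hqr, hr, hXY, hc⟩ := hcase
    obtain ⟨e, heX, heY⟩ := SetLike.not_le_iff_exists.1 hXY
    obtain ⟨f0, hf0X, hef0⟩ := exists_pair hs hnd hm heX heY
    obtain ⟨f, hfX, hef, hff⟩ : ∃ f ∈ XX B F r q, B e f = 1 ∧ B f f = 0 := by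
      by_cases hX : ∃ x ∈ XX B F r q, B x x ≠ 0
      · have : ¬ ∀ y ∈ YY B F r q, B y y = 0 := fun h => hc ⟨h, hX⟩
        push Not at this
        obtain ⟨y, hy, hyy⟩ := this
        obtain ⟨c, hcc⟩ := exists_sq (B f0 f0 / B y y)
        refine ⟨f0 + c • y, Submodule.add_mem _ hf0X (Submodule.smul_mem _ _ (YY_le hm _ _ hy)),
          ?_, ?_⟩
        · rw [map_add, map_smul, hef0, XY_zero hs heX hy]; simp
        · rw [sq_add hs, hcc, div_mul_cancel₀ _ hyy]
          linear_combination (B f0 f0) * h2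
      · push Not at hX
        exact ⟨f0, hf0X, hef0, hX _ hf0X⟩
    have hee : B e e = 0 := by
      rcases hqr.lt_or_eq with h | rfl
      · exact heX.2 e (hm (by omega) heX.1)
      · by_contra h
        exact hc ⟨YY_diag hs hm q, e, heX, h⟩
    have hP := pproj_proj hs hm hqr heX hfX hee hef hff
    have hC : ¬ C r q := fun h => hc ((hA.inv q r hq hqr hr hXY).2 h)
    have hA' := hA.map hP (fun a b _ _ _ _ _ => corner_map_iff hP
      (fun x => by rw [pproj_sq hs hee hef hff]; ring) b a)
    obtain ⟨D⟩ := ih _ (hn ▸ finrank_map_lt hP (hA.le _ heX.1) (by rw [hef]; exact one_ne_zero)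
      (pproj_f hs hee hef hff)) _ hA' rfl
    exact D.pair hs hm hq hqr hr heX hfX hee hef hff (by simp [hC]) (fun h => absurd h hC)
  · push Not at hcase
    obtain ⟨q, r, hq, hqr, hr, hXY⟩ := exists_cell hs hA.bot hm hA.rad hbot
    have hc := hcase q r hq hqr hr hXY
    have hC : C r q := (hA.inv q r hq hqr hr hXY).1 hc
    rcases hqr.lt_or_eq with hlt | rfl
    · -- off-diagonal
      obtain ⟨e, f, heX, hfX, hef, hff, hlast⟩ : ∃ e f, e ∈ XX B F q r ∧ f ∈ XX B F r q ∧
          B e f = 1 ∧ B f f = 1 ∧ ((∃ x ∈ XX B F r q, B x e = 0 ∧ B x x ≠ 0) ∨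
            ∀ x ∈ XX B F q r, B x f = 0 → x ∈ YY B F q r) := by
        obtain ⟨f', hf'X, hf'⟩ := hc.2
        by_cases hex : ∃ e ∈ XX B F q r, e ∉ YY B F q r ∧ B e f' = 0
        · obtain ⟨e, heX, heY, hef'⟩ := hex
          obtain ⟨g, hgX, heg⟩ := exists_pair hs hnd hm heX heY
          obtain ⟨c, hcc⟩ := exists_sq ((1 + B g g) / B f' f')
          refine ⟨e, g + c • f', heX, Submodule.add_mem _ hgX (Submodule.smul_mem _ _ hf'X),
            ?_, ?_, Or.inl ⟨f', hf'X, by rw [hs, hef'], hf'⟩⟩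
          · rw [map_add, map_smul, heg, hef']; simp
          · rw [sq_add hs, hcc, div_mul_cancel₀ _ hf']
            linear_combination (B g g) * h2
        · push Not at hex
          obtain ⟨e0, heX, heY⟩ := SetLike.not_le_iff_exists.1 hXY
          have h0 := hex e0 heX heY
          obtain ⟨c, hcc⟩ := exists_sq (B f' f')⁻¹
          have hc0 : c ≠ 0 := by
            rintro rfl
            rw [mul_zero] at hcc
            exact inv_ne_zero hf' hcc.symm
          refine ⟨(B e0 f' * c)⁻¹ • e0, c • f', Submodule.smul_mem _ _ heX,
            Submodule.smul_mem _ _ hf'X, ?_, ?_, Or.inr ?_⟩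
          · simp only [map_smul, LinearMap.smul_apply, smul_eq_mul]
            field_simp
          · simp only [map_smul, LinearMap.smul_apply, smul_eq_mul]
            rw [← mul_assoc, hcc, inv_mul_cancel₀ hf']
          · intro x hx hxf
            by_contra hxY
            apply hex x hx hxY
            rw [map_smul, smul_eq_mul] at hxf
            exact (mul_eq_zero.1 hxf).resolve_left hc0
      have hee : B e e = 0 := heX.2 e (hm (by omega) heX.1)
      have hP := pproj_proj hs hm hqr heX hfX hee hef hff
      have hA' := hA.map hP (by
        intro b a h1b hba haN hne hne'
        have hcor := hcase b a h1b hba haN hne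
        refine iff_of_true (corner_map hP hcor ?_) hcor
        simp only [pproj_sq hs hee hef hff, one_mul]
        by_cases hab : a = r ∧ b = q
        · obtain ⟨rfl, rfl⟩ := hab
          rcases hlast with ⟨x, hx, hxe, hxx⟩ | hlast
          · exact ⟨x, hx, by rw [hxe]; simpa using hxx⟩
          · exfalso
            apply hne'
            rintro _ ⟨x, hx, rfl⟩
            refine ⟨pproj B e f 1 x, ?_, hP.idem x⟩
            exact hlast _ (hP.XX_le _ _ ⟨x, hx, rfl⟩) (pproj_f hs hee hef hff x)
        · obtain ⟨x, hx, hxx⟩ := hcor.2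
          refine ⟨x, hx, ?_⟩
          suffices h : B x e = 0 by rw [h]; simpa using hxx
          by_contra hxe
          have har : r ≤ a := by
            by_contra h
            exact hxe (by rw [hs]; exact heX.2 x (hm (by omega) hx.1))
          have hbq : b ≤ q := by
            by_contra h
            exact hxe (hx.2 e (hm (by omega) heX.1))
          have := hcor.1 f (mem_YY_of hm hfX har hbq hab)
          rw [hff] at this
          exact one_ne_zero this)
      obtain ⟨D⟩ := ih _ (hn ▸ finrank_map_lt hP (hA.le _ heX.1) (by rw [hef]; exact one_ne_zero)
        (pproj_f hs hee hef hff)) _ hA' rfl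
      exact D.pair hs hm hq hqr hr heX hfX hee hef hff (by simp [hC]) (fun _ => hlt)
    · -- diagonal
      obtain ⟨w, hwX, hww, hlast⟩ : ∃ w ∈ XX B F q q, B w w = 1 ∧
          ((∃ x ∈ XX B F q q, B x w = 0 ∧ B x x ≠ 0) ∨
            ∀ x ∈ XX B F q q, B x w = 0 → x ∈ YY B F q q) := by
        have hnorm : ∀ x ∈ XX B F q q, B x x ≠ 0 → ∃ c : K, c ≠ 0 ∧ B (c • x) (c • x) = 1 := by
          intro x _ hxx
          obtain ⟨c, hcc⟩ := exists_sq (B x x)⁻¹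
          refine ⟨c, ?_, ?_⟩
          · rintro rfl
            rw [mul_zero] at hcc
            exact inv_ne_zero hxx hcc.symm
          · simp only [map_smul, LinearMap.smul_apply, smul_eq_mul]
            rw [← mul_assoc, hcc, inv_mul_cancel₀ hxx]
        by_cases hex : ∃ w ∈ XX B F q q, ∃ x ∈ XX B F q q, B w w ≠ 0 ∧ B x x ≠ 0 ∧ B x w = 0
        · obtain ⟨w, hw, x, hx, hww, hxx, hxw⟩ := hex
          obtain ⟨c, hc0, hc1⟩ := hnorm w hw hww
          exact ⟨c • w, Submodule.smul_mem _ _ hw, hc1, Or.inl ⟨x, hx, by simp [hxw], hxx⟩⟩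
        · push Not at hex
          obtain ⟨w0, hw0, hw00⟩ := hc.2
          obtain ⟨c, hc0, hww⟩ := hnorm w0 hw0 hw00
          have hwX := Submodule.smul_mem (XX B F q q) c hw0
          generalize c • w0 = w at hww hwX
          refine ⟨w, hwX, hww, Or.inr ?_⟩
          intro x hx hxw
          have hw1 : B w w ≠ 0 := by rw [hww]; exact one_ne_zero
          have hsq : ∀ z ∈ XX B F q q, B z w = 0 → B z z = 0 := by
            intro z hz hzw
            by_contra h
            exact hex w hwX z hz hw1 h hzw
          by_contra hxY
          obtain ⟨y0, hy0, hxy0⟩ := exists_pair hs hnd hm hx hxY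
          obtain ⟨y, hy, hxy, hyw⟩ : ∃ y ∈ XX B F q q, B x y = 1 ∧ B y w = 0 := by
            refine ⟨y0 - B y0 w • w, Submodule.sub_mem _ hy0 (Submodule.smul_mem _ _ hwX), ?_, ?_⟩
            · simp [hxy0, hxw]
            · simp [hww]
          have hxx := hsq x hx hxw
          have hyy := hsq y hy hyw
          refine hex (w + x) (Submodule.add_mem _ hwX hx) (w + y) (Submodule.add_mem _ hwX hy)
            ?_ ?_ ?_
          · simp [hww, hxx, hxw, hs w x]
          · simp [hww, hyy, hyw, hs w y]
          · simp only [map_add, LinearMap.add_apply, hww, hs w x, hxw, hs y x, hxy, hyw]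
            linear_combination h2
      have hP := lproj_proj hs hm hwX hww
      have hA' := hA.map hP (by
        intro b a h1b hba haN hne hne'
        have hcor := hcase b a h1b hba haN hne
        refine iff_of_true (corner_map hP hcor ?_) hcor
        simp only [lproj_sq hs hww]
        by_cases hab : a = q ∧ b = q
        · obtain ⟨rfl, rfl⟩ := hab
          rcases hlast with ⟨x, hx, hxe, hxx⟩ | hlast
          · exact ⟨x, hx, by rw [hxe]; simpa using hxx⟩
          · exfalso
            apply hne'
            rintro _ ⟨x, hx, rfl⟩
            refine ⟨lproj B w x, ?_, hP.idem x⟩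
            exact hlast _ (hP.XX_le _ _ ⟨x, hx, rfl⟩) (lproj_w hs hww x)
        · obtain ⟨x, hx, hxx⟩ := hcor.2
          refine ⟨x, hx, ?_⟩
          suffices h : B x w = 0 by rw [h]; simpa using hxx
          by_contra hxe
          have har : q ≤ a := by
            by_contra h
            exact hxe (by rw [hs]; exact hwX.2 x (hm (by omega) hx.1))
          have hbq : b ≤ q := by
            by_contra h
            exact hxe (hx.2 w (hm (by omega) hwX.1))
          have := hcor.1 w (mem_YY_of hm hwX har hbq hab)
          rw [hww] at this
          exact one_ne_zero this)
      obtain ⟨D⟩ := ih _ (hn ▸ finrank_map_lt hP (hA.le _ hwX.1) (by rw [hww]; exact one_ne_zero)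
        (lproj_w hs hww)) _ hA' rfl
      exact D.line hs hm hq hr hwX hww hC
end Aux3
section Aux4
variable {K V : Type*} [Field K] [AddCommGroup V] [Module K V] [FiniteDimensional K V]
  {B : V →ₗ[K] V →ₗ[K] K} {C : ℕ → ℕ → Prop} {N : ℕ} {F : ℕ → Submodule K V}

/-- index type -/
abbrev Dec.I (D : Dec B C N F) : Type := D.P ⊕ D.P ⊕ D.S

instance (D : Dec B C N F) : Fintype D.P := D.fP
instance (D : Dec B C N F) : Fintype D.S := D.fS

/-- all vectors -/
def Dec.v (D : Dec B C N F) : D.I → V := Sum.elim D.e (Sum.elim D.f D.g)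
/-- degree -/
def Dec.d (D : Dec B C N F) : D.I → ℕ := Sum.elim D.q (Sum.elim D.r D.c)
/-- codegree -/
def Dec.d' (D : Dec B C N F) : D.I → ℕ := Sum.elim D.r (Sum.elim D.q D.c)
open Classical in
/-- dual vectors -/
noncomputable def Dec.w (D : Dec B C N F) : D.I → V :=
  Sum.elim (fun p => D.f p - (if C (D.r p) (D.q p) then (1 : K) else 0) • D.e p)
    (Sum.elim D.e D.g)

open Classical in
lemma Dec.dual (hs : ∀ u v : V, B u v = B v u) (D : Dec B C N F) (i j : D.I) :
    B (D.v i) (D.w j) = if i = j then 1 else 0 := by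
  rcases i with p | p | s <;> rcases j with p' | p' | s'
  · by_cases hC : C (D.r p') (D.q p') <;> simp [Dec.v, Dec.w, D.ef, D.ee, hC]
  · simp [Dec.v, Dec.w, D.ee]
  · simp [Dec.v, Dec.w, D.eg]
  · by_cases hC : C (D.r p') (D.q p')
    · by_cases h : p = p'
      · subst h
        simp [Dec.v, Dec.w, D.ff, hs (D.f p) (D.e p), D.ef, hC]
      · simp [Dec.v, Dec.w, D.ff, hs (D.f p) (D.e p'), D.ef, hC, h, Ne.symm h]
    · by_cases h : p = p'
      · subst h
        simp [Dec.v, Dec.w, D.ff, hC]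
      · simp [Dec.v, Dec.w, D.ff, hC, h]
  · simp [Dec.v, Dec.w, hs (D.f p), D.ef, eq_comm]
  · simp [Dec.v, Dec.w, D.fg]
  · by_cases hC : C (D.r p') (D.q p') <;> simp [Dec.v, Dec.w, hs (D.g s), D.fg, D.eg, hC]
  · simp [Dec.v, Dec.w, hs (D.g s), D.eg]
  · simp [Dec.v, Dec.w, D.gg]

lemma Dec.v_mem (D : Dec B C N F) (i : D.I) : D.v i ∈ F (D.d i) := by
  rcases i with p | p | s
  exacts [D.he p, D.hf p, D.hgm s]

lemma Dec.w_mem (hm : Monotone F) (D : Dec B C N F) (i : D.I) : D.w i ∈ F (D.d' i) := by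
  rcases i with p | p | s
  · exact Submodule.sub_mem _ (D.hf p) (Submodule.smul_mem _ _ (hm (D.hqr p) (D.he p)))
  · exact D.he p
  · exact D.hgm s

lemma Dec.F_eq (hm : Monotone F) (D : Dec B C N F) (j : ℕ) :
    F j = Submodule.span K (D.v '' {i | D.d i ≤ j}) := by
  apply le_antisymm
  · refine (D.hF j).trans (Submodule.span_mono ?_)
    rintro _ ((⟨p, hp, rfl⟩ | ⟨p, hp, rfl⟩) | ⟨p, hp, rfl⟩)
    exacts [⟨Sum.inl p, hp, rfl⟩, ⟨Sum.inr (Sum.inl p), hp, rfl⟩, ⟨Sum.inr (Sum.inr p), hp, rfl⟩]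
  · rw [Submodule.span_le]
    rintro _ ⟨i, hi, rfl⟩
    exact hm hi (D.v_mem i)

lemma Dec.basis (hs : ∀ u v : V, B u v = B v u) (hm : Monotone F) (hN : F N = ⊤)
    (D : Dec B C N F) :
    ∃ b : Basis D.I K V, (∀ i, b i = D.v i) ∧ ∀ x i, b.repr x i = B x (D.w i) := by
  classical
  have hli : LinearIndependent K D.v := by
    rw [Fintype.linearIndependent_iff]
    intro g hg i
    have := congrArg (fun x => B x (D.w i)) hg
    simpa only [map_sum, LinearMap.sum_apply, map_smul, LinearMap.smul_apply, D.dual hs,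
      smul_eq_mul, mul_ite, mul_one, mul_zero, Finset.sum_ite_eq', Finset.mem_univ, if_true,
      map_zero, LinearMap.zero_apply] using this
  have hsp : ⊤ ≤ Submodule.span K (Set.range D.v) := by
    rw [← hN, D.F_eq hm]
    exact Submodule.span_mono (Set.image_subset_range _ _)
  refine ⟨Basis.mk hli hsp, fun i => by simp, fun x i => ?_⟩
  have : (Basis.mk hli hsp).coord i = B.flip (D.w i) := by
    apply (Basis.mk hli hsp).ext
    intro j
    rw [Basis.coord_apply, Basis.repr_self, LinearMap.flip_apply, Basis.mk_apply, D.dual hs,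
      Finsupp.single_apply]
  exact congrArg (fun f => f x) this

lemma Dec.Z_eq (hs : ∀ u v : V, B u v = B v u) (hm : Monotone F)
    (D : Dec B C N F) {b : Basis D.I K V} (hb : ∀ i, b i = D.v i)
    (hr : ∀ x i, b.repr x i = B x (D.w i)) (a c : ℕ) :
    F a ⊓ perp B (F c) = Submodule.span K (b '' {i | D.d i ≤ a ∧ c < D.d' i}) := by
  classical
  have hb' : (b : D.I → V) = D.v := funext hb
  ext x
  rw [Submodule.mem_inf, Basis.mem_span_image, D.F_eq hm a, ← hb', Basis.mem_span_image]
  have hperp : x ∈ perp B (F c) ↔ ∀ i, D.d' i ≤ c → B x (D.w i) = 0 := by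
    constructor
    · intro h i hi
      exact h _ (hm hi (D.w_mem hm i))
    · intro h y hy
      rw [D.F_eq hm] at hy
      induction hy using Submodule.span_induction with
      | zero => simp
      | add y z _ _ h1 h2 => rw [map_add, h1, h2, add_zero]
      | smul k y _ h1 => rw [map_smul, h1, smul_zero]
      | mem y hy =>
        obtain ⟨i, hi, rfl⟩ := hy
        rcases i with p | p | s
        · exact h (Sum.inr (Sum.inl p)) hi
        · have h1 := h (Sum.inl p) hi
          have h2 := h (Sum.inr (Sum.inl p)) ((D.hqr p).trans hi)
          simp only [Dec.w, Sum.elim_inl, Sum.elim_inr, map_sub, map_smul] at h1 h2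
          rw [h2, smul_zero, sub_zero] at h1
          exact h1
        · exact h (Sum.inr (Sum.inr s)) hi
  rw [hperp]
  simp only [Set.subset_def, Finset.mem_coe, Finsupp.mem_support_iff, Set.mem_setOf_eq, hr]
  constructor
  · rintro ⟨h1, h2⟩ i hi
    refine ⟨h1 i hi, ?_⟩
    by_contra h
    exact hi (h2 i (by omega))
  · intro h
    refine ⟨fun i hi => (h i hi).1, fun i hi => ?_⟩
    by_contra h'
    have := (h i h').2
    omega

lemma finrank_quot {X Y : Submodule K V} (h : Y ≤ X) :
    finrank K (↥X ⧸ Submodule.comap X.subtype Y) + finrank K Y = finrank K X := by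
  have h1 := Submodule.finrank_quotient_add_finrank (Submodule.comap X.subtype Y)
  have h2 : finrank K (Submodule.comap X.subtype Y) = finrank K Y := 
    (Submodule.comapSubtypeEquivOfLe h).finrank_eq
  omega

open Classical in
lemma finrank_span_basis {ι : Type*} [Fintype ι] (b : Basis ι K V) (T : Set ι) :
    finrank K (Submodule.span K (b '' T)) = (Finset.univ.filter (· ∈ T)).card := by
  have h1 : LinearIndependent K (fun i : T => b i) := b.linearIndependent.comp _ Subtype.val_injective
  have h2 := finrank_span_eq_card h1
  rw [Set.image_eq_range, h2, Fintype.card_subtype]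

open Classical in
lemma Dec.nqr_eq (hs : ∀ u v : V, B u v = B v u) (hm : Monotone F) (hN : F N = ⊤)
    (D : Dec B C N F) (q r : ℕ) (hq : 1 ≤ q) (hr : 1 ≤ r) :
    nqr B F q r = (Finset.univ.filter (fun i : D.I => D.d i = q ∧ D.d' i = r)).card := by
  obtain ⟨b, hb, hrep⟩ := D.basis hs hm hN
  have hX := D.Z_eq hs hm hb hrep q (r - 1)
  have hY1 := D.Z_eq hs hm hb hrep q r
  have hY2 := D.Z_eq hs hm hb hrep (q - 1) (r - 1)
  have hfr := finrank_quot (YY_le (B := B) hm q r)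
  have e1 := finrank_span_basis b {i | D.d i ≤ q ∧ r - 1 < D.d' i}
  have e2 := finrank_span_basis b ({i | D.d i ≤ q ∧ r < D.d' i} ∪
    {i | D.d i ≤ q - 1 ∧ r - 1 < D.d' i})
  rw [← hX] at e1
  rw [Set.image_union, Submodule.span_union, ← hY1, ← hY2] at e2
  change nqr B F q r + finrank K ↥(F q ⊓ perp B (F r) ⊔ F (q - 1) ⊓ perp B (F (r - 1))) =
    finrank K ↥(F q ⊓ perp B (F (r - 1))) at hfr
  have : (Finset.univ.filter (fun i : D.I => D.d i = q ∧ D.d' i = r)).card +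
      (Finset.univ.filter (· ∈ {i | D.d i ≤ q ∧ r < D.d' i} ∪
        {i | D.d i ≤ q - 1 ∧ r - 1 < D.d' i})).card =
      (Finset.univ.filter (· ∈ {i | D.d i ≤ q ∧ r - 1 < D.d' i})).card := by
    rw [← Finset.card_union_of_disjoint]
    · congr 1
      ext i
      simp only [Finset.mem_union, Finset.mem_filter, Finset.mem_univ, true_and, Set.mem_union,
        Set.mem_setOf_eq]
      omega
    · rw [Finset.disjoint_filter]
      intro i _ h
      simp only [Set.mem_union, Set.mem_setOf_eq]
      omega
  have e2' : finrank K ↥(F q ⊓ perp B (F r) ⊔ F (q - 1) ⊓ perp B (F (r - 1))) =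
      (Finset.univ.filter (· ∈ {i | D.d i ≤ q ∧ r < D.d' i} ∪
        {i | D.d i ≤ q - 1 ∧ r - 1 < D.d' i})).card := by convert e2
  have e1' : finrank K ↥(F q ⊓ perp B (F (r - 1))) =
      (Finset.univ.filter (· ∈ {i | D.d i ≤ q ∧ r - 1 < D.d' i})).card := by convert e1
  omega

open Classical in
lemma nqr1_eq [CharP K 2] [PerfectField K] (hs : ∀ u v : V, B u v = B v u) (hm : Monotone F)
    (V0 : Submodule K V) (hV0 : ∀ v : V, v ∈ V0 ↔ B v v = 0) (a b : ℕ) :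
    nqr1 B F V0 a b = if Corner B F a b then 1 else 0 := by
  have h2 : (2 : K) = 0 := CharTwo.two_eq_zero
  unfold nqr1 nqr
  change finrank K (↥(XX B F a b) ⧸ Submodule.comap (XX B F a b).subtype (YY B F a b)) -
    finrank K (Submodule.map (Submodule.comap (XX B F a b).subtype (YY B F a b)).mkQ
      (Submodule.comap (XX B F a b).subtype V0)) = _
  have hYX := YY_le (B := B) hm a b
  have hdef : Corner B F a b ↔ (∀ y ∈ YY B F a b, B y y = 0) ∧ ∃ x ∈ XX B F a b, B x x ≠ 0 :=
    Iff.rfl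
  generalize Corner B F a b = Q at *
  generalize XX B F a b = X at *
  generalize YY B F a b = Y at *
  set Y' := Submodule.comap X.subtype Y with hY'
  set S := Submodule.comap X.subtype V0 with hS
  by_cases hQ : Q
  · rw [if_pos hQ]
    obtain ⟨hY, x, hx, hxx⟩ := hdef.1 hQ
    have hYS : Y' ≤ S := by
      intro y hy
      exact (hV0 _).2 (hY _ hy)
    have hc : IsCompl (Submodule.map Y'.mkQ S) (Submodule.span K {Y'.mkQ ⟨x, hx⟩}) := by
      constructor
      · rw [Submodule.disjoint_span_singleton' ?_]
        · rintro ⟨s, hs', hsx⟩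
          have : s - ⟨x, hx⟩ ∈ Y' := (Submodule.Quotient.eq Y').1 hsx
          have h3 : (⟨x, hx⟩ : X) ∈ S := by
            have := S.sub_mem hs' (hYS this)
            simpa using this
          exact hxx ((hV0 x).1 h3)
        · intro h
          have : (⟨x, hx⟩ : X) ∈ Y' := (Submodule.Quotient.mk_eq_zero Y').1 h
          exact hxx (hY x this)
      · rw [codisjoint_iff, eq_top_iff]
        intro z _
        obtain ⟨z, rfl⟩ := Submodule.mkQ_surjective Y' z
        obtain ⟨c, hcc⟩ := exists_sq (B z z / B x x)
        have hz : z = (z + c • ⟨x, hx⟩) + (-c) • ⟨x, hx⟩ := by simp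
        rw [hz, map_add, map_smul]
        refine Submodule.add_mem_sup ⟨_, ?_, rfl⟩
          (Submodule.smul_mem _ _ (Submodule.mem_span_singleton_self _))
        change ((z + c • ⟨x, hx⟩ : X) : V) ∈ V0
        rw [hV0, Submodule.coe_add, Submodule.coe_smul, sq_add hs, hcc, div_mul_cancel₀ _ hxx]
        linear_combination (B z z) * h2
    have h3 := Submodule.finrank_add_eq_of_isCompl hc
    have h4 : finrank K (Submodule.span K {Y'.mkQ ⟨x, hx⟩}) = 1 := by
      apply finrank_span_singleton
      intro h
      have : (⟨x, hx⟩ : X) ∈ Y' := (Submodule.Quotient.mk_eq_zero Y').1 h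
      exact hxx (hY x this)
    omega
  · rw [if_neg hQ]
    have htop : Submodule.map Y'.mkQ S = ⊤ := by
      rw [eq_top_iff]
      intro z _
      obtain ⟨z, rfl⟩ := Submodule.mkQ_surjective Y' z
      by_cases hX : ∃ x ∈ X, B x x ≠ 0
      · have : ¬ ∀ y ∈ Y, B y y = 0 := fun h => hQ (hdef.2 ⟨h, hX⟩)
        push Not at this
        obtain ⟨y, hy, hyy⟩ := this
        obtain ⟨c, hcc⟩ := exists_sq (B z z / B y y)
        refine ⟨z + c • ⟨y, hYX hy⟩, ?_, ?_⟩
        · change ((z + c • ⟨y, hYX hy⟩ : X) : V) ∈ V0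
          rw [hV0, Submodule.coe_add, Submodule.coe_smul, sq_add hs, hcc, div_mul_cancel₀ _ hyy]
          linear_combination (B z z) * h2
        · rw [map_add, map_smul]
          have : Y'.mkQ ⟨y, hYX hy⟩ = 0 := (Submodule.Quotient.mk_eq_zero Y').2 hy
          rw [this]; simp
      · push Not at hX
        exact ⟨z, (hV0 _).2 (hX _ z.2), rfl⟩
    rw [htop, finrank_top, Nat.sub_self]
end Aux4
section Aux5

open Classical in
lemma exists_idx (P : Type) [Fintype P] (Q : P → Prop) :
    ∃ idx : P → ℕ, Function.Injective idx ∧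
      (∀ p, ¬ Q p → idx p < (Finset.univ.filter (fun p => ¬ Q p)).card) ∧
      (∀ p, Q p → (Finset.univ.filter (fun p => ¬ Q p)).card ≤ idx p ∧
        idx p < (Finset.univ.filter (fun p => ¬ Q p)).card + (Finset.univ.filter Q).card) := by
  obtain ⟨a⟩ : Nonempty ({p // ¬ Q p} ≃ Fin (Finset.univ.filter (fun p => ¬ Q p)).card) :=
    ⟨Fintype.equivFinOfCardEq (Fintype.card_subtype _)⟩
  obtain ⟨b⟩ : Nonempty ({p // Q p} ≃ Fin (Finset.univ.filter Q).card) :=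
    ⟨Fintype.equivFinOfCardEq (Fintype.card_subtype _)⟩
  refine ⟨fun p => if h : Q p then (Finset.univ.filter (fun p => ¬ Q p)).card + b ⟨p, h⟩
    else a ⟨p, h⟩, ?_, ?_, ?_⟩
  · intro p p' h
    by_cases h1 : Q p <;> by_cases h2 : Q p' <;> simp only [h1, h2, dif_pos, dif_neg, not_false_eq_true] at h
    · have : b ⟨p, h1⟩ = b ⟨p', h2⟩ := Fin.ext (by omega)
      simpa using this
    · have := (a ⟨p', h2⟩).2
      omega
    · have := (a ⟨p, h1⟩).2
      omega
    · have : a ⟨p, h1⟩ = a ⟨p', h2⟩ := Fin.ext (by omega)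
      simpa using this
  · intro p h
    simp only [h, dif_neg, not_false_eq_true]
    exact (a ⟨p, h⟩).2
  · intro p h
    simp only [h, dif_pos]
    have := (b ⟨p, h⟩).2
    omega

open Classical in
lemma sum_count {I : Type} [Fintype I] (d d' : I → ℕ) (C : ℕ → ℕ → Prop) (N : ℕ)
    (h1 : ∀ i, 1 ≤ d i) (h2 : ∀ i, d i ≤ N) (h3 : ∀ i, d' i ≤ N) :
    ∑ q ∈ Finset.Icc 1 N, ∑ r ∈ Finset.Icc (q + 1) N,
      (Finset.univ.filter (fun i => d i = q ∧ d' i = r)).card * (if C r q then 1 else 0) =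
    (Finset.univ.filter (fun i => d i < d' i ∧ C (d' i) (d i))).card := by
  simp only [Finset.card_filter, Finset.sum_mul]
  rw [Finset.sum_congr rfl (fun q _ => Finset.sum_comm), Finset.sum_comm]
  refine Finset.sum_congr rfl fun i _ => ?_
  rw [Finset.sum_eq_single (d i)]
  · by_cases h : d i < d' i
    · rw [Finset.sum_eq_single (d' i)]
      · simp [h]
      · intro r _ hr
        simp [Ne.symm hr]
      · intro h'
        exact absurd (Finset.mem_Icc.2 ⟨h, h3 i⟩) h'
    · rw [Finset.sum_eq_zero]
      · simp [h]
      · intro r hr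
        have := (Finset.mem_Icc.1 hr).1
        have : d' i ≠ r := by omega
        simp [this]
  · intro q _ hq
    apply Finset.sum_eq_zero
    intro r _
    simp [Ne.symm hq]
  · intro h'
    exact absurd (Finset.mem_Icc.2 ⟨h1 i, h2 i⟩) h'

open Classical in
lemma sum_count' {I : Type} [Fintype I] (d d' : I → ℕ) (C : ℕ → ℕ → Prop) (N : ℕ)
    (h1 : ∀ i, 1 ≤ d i) (h2 : ∀ i, d i ≤ N) :
    ∑ q ∈ Finset.Icc 1 N,
      (Finset.univ.filter (fun i => d i = q ∧ d' i = q)).card * (if C q q then 1 else 0) =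
    (Finset.univ.filter (fun i => d i = d' i ∧ C (d i) (d i))).card := by
  simp only [Finset.card_filter, Finset.sum_mul]
  rw [Finset.sum_comm]
  refine Finset.sum_congr rfl fun i _ => ?_
  rw [Finset.sum_eq_single (d i)]
  · by_cases h : d i = d' i
    · simp [h]
    · simp [h, Ne.symm h]
  · intro q _ hq
    simp [Ne.symm hq]
  · intro h'
    exact absurd (Finset.mem_Icc.2 ⟨h1 i, h2 i⟩) h'

end Aux5
/-- Theorem 1.1(1): there is a basis of V coordinated with the
flag whose Gram matrix is diag(M₀,…,M₀,M₁,…,M₁,1ₛ), where the number of blocks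
M₁ equals Σ_{q<r} n_qr·n_rq^1 and s = Σ_q n_qq·n_qq^1. -/
theorem statement10 {K V : Type*} [Field K] [AddCommGroup V] [Module K V]
    [FiniteDimensional K V] [CharP K 2] [PerfectField K]
    (B : V →ₗ[K] V →ₗ[K] K)
    (hsymm : ∀ u v : V, B u v = B v u)
    (hnd : ∀ v : V, (∀ w : V, B v w = 0) → v = 0)
    (hna : ∃ v : V, B v v ≠ 0)
    (Vf : ℕ → Submodule K V) (hbot : Vf 0 = ⊥) (hmono : Monotone Vf)
    (N : ℕ) (hN : ∀ q, N ≤ q → Vf q = ⊤)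
    (V0 : Submodule K V) (hV0 : ∀ v : V, v ∈ V0 ↔ B v v = 0) :
    ∃ k t s : ℕ,
      2 * k + 2 * t + s = finrank K V ∧
      t = ∑ q ∈ Finset.Icc 1 N, ∑ r ∈ Finset.Icc (q + 1) N,
            nqr B Vf q r * nqr1 B Vf V0 r q ∧
      s = ∑ q ∈ Finset.Icc 1 N, nqr B Vf q q * nqr1 B Vf V0 q q ∧
      ∃ e : Basis (Fin (finrank K V)) K V,
        (∀ j : ℕ, Vf j = Submodule.span K (Set.range e ∩ ↑(Vf j))) ∧
        ∀ i j : Fin (finrank K V), B (e i) (e j) = gramPattern K k t i j := by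
  classical
  have hA : Adm B N (Corner B Vf) Vf :=
    { bot := hbot, mono := hmono
      le := fun j => by rw [hN N le_rfl]; exact le_top
      rad := fun x _ h => hnd x fun w => h w (by rw [hN N le_rfl]; trivial)
      inv := fun _ _ _ _ _ _ => Iff.rfl }
  obtain ⟨D⟩ := main_dec hsymm hnd N (Corner B Vf) _ Vf hA rfl
  have hN' := hN N le_rfl
  obtain ⟨b, hb, -⟩ := D.basis hsymm hmono hN'
  have d1 : ∀ i, 1 ≤ D.d i := by
    rintro (p | p | s)
    exacts [D.hq p, (D.hq p).trans (D.hqr p), D.hc s]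
  have d2 : ∀ i, D.d i ≤ N := by
    rintro (p | p | s)
    exacts [(D.hqr p).trans (D.hr p), D.hr p, D.hcN s]
  have d3 : ∀ i, D.d' i ≤ N := by
    rintro (p | p | s)
    exacts [D.hr p, (D.hqr p).trans (D.hr p), D.hcN s]
  set Q : D.P → Prop := fun p => Corner B Vf (D.r p) (D.q p) with hQ
  obtain ⟨idx, hinj, hidx0, hidx1⟩ := exists_idx D.P Q
  have hkt : (Finset.univ.filter (fun p => ¬ Q p)).card + (Finset.univ.filter Q).card =
      Fintype.card D.P := by
    rw [add_comm, Finset.card_filter_add_card_filter_not, Finset.card_univ]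
  have hfin : finrank K V = Fintype.card D.P + (Fintype.card D.P + Fintype.card D.S) := by
    rw [finrank_eq_card_basis b, Fintype.card_sum, Fintype.card_sum]
  obtain ⟨c⟩ : Nonempty (D.S ≃ Fin (Fintype.card D.S)) := ⟨Fintype.equivFin _⟩
  have ht : (Finset.univ.filter Q).card = ∑ q ∈ Finset.Icc 1 N, ∑ r ∈ Finset.Icc (q + 1) N,
            nqr B Vf q r * nqr1 B Vf V0 r q := by
    have h1 := sum_count D.d D.d' (Corner B Vf) N d1 d2 d3
    rw [Finset.card_filter, Fintype.sum_sum_type, Fintype.sum_sum_type] at h1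
    rw [Finset.card_filter]
    refine Eq.trans ?_ (h1.symm.trans ?_)
    · have z1 : ∀ p, (if D.d (Sum.inr (Sum.inl p)) < D.d' (Sum.inr (Sum.inl p)) ∧
          Corner B Vf (D.d' (Sum.inr (Sum.inl p))) (D.d (Sum.inr (Sum.inl p))) then 1 else 0) = 0 := by
        intro p
        rw [if_neg]
        rintro ⟨h, -⟩
        exact absurd h (not_lt.2 (D.hqr p))
      have z2 : ∀ s, (if D.d (Sum.inr (Sum.inr s)) < D.d' (Sum.inr (Sum.inr s)) ∧
          Corner B Vf (D.d' (Sum.inr (Sum.inr s))) (D.d (Sum.inr (Sum.inr s))) then 1 else 0) = 0 := by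
        intro p
        rw [if_neg]
        rintro ⟨h, -⟩
        exact absurd h (lt_irrefl _)
      rw [Finset.sum_congr rfl (fun p _ => z1 p), Finset.sum_congr rfl (fun p _ => z2 p)]
      simp only [Finset.sum_const_zero, add_zero]
      refine Finset.sum_congr rfl fun p _ => ?_
      congr 1
      exact propext ⟨fun h => ⟨D.hC p h, h⟩, fun h => h.2⟩
    · refine Finset.sum_congr rfl fun q hq => Finset.sum_congr rfl fun r hr => ?_
      have := (Finset.mem_Icc.1 hq).1
      have := (Finset.mem_Icc.1 hr).1
      rw [nqr1_eq hsymm hmono V0 hV0, D.nqr_eq hsymm hmono hN' q r (by omega) (by omega)]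
  have hsS : Fintype.card D.S = ∑ q ∈ Finset.Icc 1 N, nqr B Vf q q * nqr1 B Vf V0 q q := by
    have h1 := sum_count' D.d D.d' (Corner B Vf) N d1 d2
    rw [Finset.card_filter, Fintype.sum_sum_type, Fintype.sum_sum_type] at h1
    refine Eq.trans ?_ (h1.symm.trans ?_)
    · have z1 : ∀ p, (if D.d (Sum.inr (Sum.inl p)) = D.d' (Sum.inr (Sum.inl p)) ∧
          Corner B Vf (D.d (Sum.inr (Sum.inl p))) (D.d (Sum.inr (Sum.inl p))) then 1 else 0) = 0 := by
        intro p
        rw [if_neg]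
        rintro ⟨h, h'⟩
        change D.r p = D.q p at h
        change Corner B Vf (D.r p) (D.r p) at h'
        have := D.hC p (by rw [← h]; exact h')
        omega
      have z0 : ∀ p, (if D.d (Sum.inl p) = D.d' (Sum.inl p) ∧
          Corner B Vf (D.d (Sum.inl p)) (D.d (Sum.inl p)) then 1 else 0) = 0 := by
        intro p
        rw [if_neg]
        rintro ⟨h, h'⟩
        change D.q p = D.r p at h
        change Corner B Vf (D.q p) (D.q p) at h'
        have := D.hC p (by rw [← h]; exact h')
        omega
      have z2 : ∀ s, (if D.d (Sum.inr (Sum.inr s)) = D.d' (Sum.inr (Sum.inr s)) ∧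
          Corner B Vf (D.d (Sum.inr (Sum.inr s))) (D.d (Sum.inr (Sum.inr s))) then 1 else 0) = 1 := by
        intro s
        rw [if_pos]
        exact ⟨rfl, D.hg s⟩
      rw [Finset.sum_congr rfl (fun p _ => z1 p), Finset.sum_congr rfl (fun p _ => z2 p),
        Finset.sum_congr rfl (fun p _ => z0 p)]
      simp
    · refine Finset.sum_congr rfl fun q hq => ?_
      have := (Finset.mem_Icc.1 hq).1
      rw [nqr1_eq hsymm hmono V0 hV0, D.nqr_eq hsymm hmono hN' q q (by omega) (by omega)]
  generalize hk : (Finset.univ.filter (fun p => ¬ Q p)).card = k at *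
  generalize ht' : (Finset.univ.filter Q).card = t at *
  generalize hs' : Fintype.card D.S = s at *
  refine ⟨k, t, s, by omega, ht, hsS, ?_⟩
  have hidx : ∀ p, idx p < k + t := by
    intro p
    by_cases h : Q p
    · exact (hidx1 p h).2
    · have := hidx0 p h
      omega
  let pos : D.I → Fin (finrank K V) := Sum.elim
    (fun p => ⟨2 * idx p, by have := hidx p; omega⟩)
    (Sum.elim (fun p => ⟨2 * idx p + 1, by have := hidx p; omega⟩)
      (fun x => ⟨2 * k + 2 * t + c x, by have := (c x).2; omega⟩))
  have p1 : ∀ p, (pos (Sum.inl p)).val = 2 * idx p := fun _ => rfl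
  have p2 : ∀ p, (pos (Sum.inr (Sum.inl p))).val = 2 * idx p + 1 := fun _ => rfl
  have p3 : ∀ x, (pos (Sum.inr (Sum.inr x))).val = 2 * k + 2 * t + c x := fun _ => rfl
  have hposinj : Function.Injective pos := by
    rintro (p | p | x) (p' | p' | x') h
    all_goals
      have h' := congrArg Fin.val h
      simp only [p1, p2, p3] at h'
      try have a1 := hidx p
      try have a2 := hidx p'
    · rw [hinj (show idx p = idx p' by omega)]
    · omega
    · omega
    · omega
    · rw [hinj (show idx p = idx p' by omega)]
    · omega
    · omega
    · omega
    · rw [c.injective (Fin.ext (show (c x).val = c x' by omega))]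
  have hbij : Function.Bijective pos := by
    rw [Fintype.bijective_iff_injective_and_card]
    refine ⟨hposinj, ?_⟩
    rw [Fintype.card_fin, finrank_eq_card_basis b]
  let E := Equiv.ofBijective pos hbij
  have hE : ∀ i, (b.reindex E) (pos i) = D.v i := by
    intro i
    rw [Basis.reindex_apply, ← hb]
    congr 1
    exact E.symm_apply_apply i
  refine ⟨b.reindex E, ?_, ?_⟩
  · intro j
    apply le_antisymm
    · conv_lhs => rw [D.F_eq hmono j]
      apply Submodule.span_mono
      rintro _ ⟨i, hi, rfl⟩
      exact ⟨⟨pos i, hE i⟩, hmono hi (D.v_mem i)⟩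
    · rw [Submodule.span_le]
      exact Set.inter_subset_right
  · intro i j
    obtain ⟨i, rfl⟩ := hbij.2 i
    obtain ⟨j, rfl⟩ := hbij.2 j
    rw [hE, hE]
    have hQidx : ∀ p, Q p ↔ ¬ (2 * idx p < 2 * k) := by
      intro p
      by_cases h : Q p
      · have := (hidx1 p h).1
        exact ⟨fun _ => by omega, fun _ => h⟩
      · have := hidx0 p h
        exact ⟨fun h' => absurd h' h, fun h' => by omega⟩
    have hii : ∀ p p', p = p' ↔ idx p = idx p' := fun p p' => hinj.eq_iff.symm
    have hcc : ∀ x x', x = x' ↔ (c x).val = (c x').val := fun x x' => by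
      rw [Fin.val_inj, c.injective.eq_iff]
    have fe : ∀ p p', B (D.f p) (D.e p') = if p' = p then 1 else 0 := fun p p' => by
      rw [hsymm, D.ef]
    have ge : ∀ x p, B (D.g x) (D.e p) = 0 := fun x p => by rw [hsymm, D.eg]
    have gf : ∀ x p, B (D.g x) (D.f p) = 0 := fun x p => by rw [hsymm, D.fg]
    have ff : ∀ p p', B (D.f p) (D.f p') = if p = p' ∧ Q p then 1 else 0 := D.ff
    unfold gramPattern
    simp only [Fin.ext_iff]
    rcases i with p | p | x <;> rcases j with p' | p' | x' <;>
      simp only [p1, p2, p3, Dec.v, Sum.elim_inl, Sum.elim_inr, D.ee, D.ef, D.eg, D.fg, D.gg, fe, ff,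
        ge, gf, hQidx, hii, hcc]
    all_goals
      try have a1 := hidx p
      try have a2 := hidx p'
      split_ifs <;> first | rfl | (exfalso; omega)
end

section
/- Under the map A ↦ b_A, where b_A(u,v) = b(Au,v), the image of the derived subalgebra s(V,b)^{(1)} = [s(V,b), s(V,b)] is exactly the space of all alternating bilinear forms on V (bilinear forms ω with ω(v,v) = 0 for all v ∈ V). -/
open Module

/-- The Lie algebra `s(V,b)` of endomorphisms preserving the bilinear form `b`
(in characteristic 2, self-adjoint endomorphisms), as a subspace of `End K V`. -/
def sAdj {K V : Type*} [Field K] [AddCommGroup V] [Module K V]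
    (B : V →ₗ[K] V →ₗ[K] K) : Submodule K (Module.End K V) where
  carrier := {A | ∀ u v : V, B (A u) v = B u (A v)}
  add_mem' := by
    intro A C hA hC u v
    simp [LinearMap.add_apply, map_add, hA u v, hC u v]
  zero_mem' := by
    intro u v
    simp
  smul_mem' := by
    intro c A hA u v
    simp [LinearMap.smul_apply, map_smul, hA u v]

/-- The derived subalgebra `s(V,b)⁽¹⁾ = [s(V,b), s(V,b)]`, spanned by
commutators of elements of `s(V,b)`. -/
def sAdjDerived {K V : Type*} [Field K] [AddCommGroup V] [Module K V]
    (B : V →ₗ[K] V →ₗ[K] K) : Submodule K (Module.End K V) :=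
  Submodule.span K
    {C : Module.End K V | ∃ A₁ ∈ sAdj B, ∃ A₂ ∈ sAdj B, C = A₁ * A₂ - A₂ * A₁}

theorem aux_sum {K M ι : Type*} [Field K] [AddCommGroup M] [Module K M] [DecidableEq ι]
    (P : Submodule K M) (c : ι → ι → K) (g : ι → ι → M) (h0 : ∀ i, c i i = 0)
    (h1 : ∀ i j, c i j = - c j i) (hg : ∀ i j, g i j - g j i ∈ P) (s : Finset ι) :
    ∑ i ∈ s, ∑ j ∈ s, c i j • g i j ∈ P := by
  induction s using Finset.induction_on with
  | empty => simp
  | insert a s ha ih =>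
    have : ∑ i ∈ insert a s, ∑ j ∈ insert a s, c i j • g i j
        = ∑ j ∈ s, c a j • (g a j - g j a) + ∑ i ∈ s, ∑ j ∈ s, c i j • g i j := by
      simp only [Finset.sum_insert ha, h0, zero_smul, zero_add, Finset.sum_add_distrib, smul_sub,
        Finset.sum_sub_distrib]
      have : ∑ i ∈ s, c i a • g i a = - ∑ i ∈ s, c a i • g i a := by
        rw [← Finset.sum_neg_distrib]
        refine Finset.sum_congr rfl fun i _ => ?_
        rw [h1 i a, neg_smul]
      rw [this]; abel
    rw [this]
    exact P.add_mem (P.sum_mem fun j _ => P.smul_mem _ (hg a j)) ih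

/-- The rank one operator `x ↦ b(u,x) v`. -/
def rk {K V : Type*} [Field K] [AddCommGroup V] [Module K V]
    (B : V →ₗ[K] V →ₗ[K] K) (u v : V) : Module.End K V := (B u).smulRight v

theorem rk_wedge {K V : Type*} [Field K] [AddCommGroup V] [Module K V]
    (B : V →ₗ[K] V →ₗ[K] K)
    (hsymm : ∀ u v : V, B u v = B v u)
    (hnd : ∀ v : V, (∀ w : V, B v w = 0) → v = 0) (u v : V) :
    rk B u v - rk B v u ∈ sAdjDerived B := by
  have hs : ∀ u, rk B u u ∈ sAdj B := by
    intro u x y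
    simp [rk, hsymm x u, mul_comm]
  have key : ∀ u v, B u v ≠ 0 → rk B u v - rk B v u ∈ sAdjDerived B := by
    intro u v h
    have h1 : rk B v v * rk B u u - rk B u u * rk B v v ∈ sAdjDerived B :=
      Submodule.subset_span ⟨_, hs v, _, hs u, rfl⟩
    have h2 : rk B u v - rk B v u =
        (B u v)⁻¹ • (rk B v v * rk B u u - rk B u u * rk B v v) := by
      rw [eq_inv_smul_iff₀ h]
      ext x
      simp [rk, hsymm v u, smul_sub, smul_smul, mul_comm]
    rw [h2]
    exact Submodule.smul_mem _ _ h1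
  by_cases huv : B u v = 0
  · by_cases hu : u = 0
    · subst hu
      have : rk B 0 v - rk B v 0 = 0 := by ext x; simp [rk]
      rw [this]; exact Submodule.zero_mem _
    · obtain ⟨w, hw⟩ : ∃ w, B u w ≠ 0 := by
        by_contra! h
        exact hu (hnd u h)
      have e : rk B u v - rk B v u =
          (rk B u (v + w) - rk B (v + w) u) - (rk B u w - rk B w u) := by
        ext x
        simp [rk, add_smul]
        abel
      rw [e]
      refine Submodule.sub_mem _ (key _ _ ?_) (key _ _ hw)
      simpa [huv] using hw
  · exact key u v huv

/-- under A ↦ b_A, b_A(u,v) = b(Au,v), the image of the derived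
subalgebra s(V,b)⁽¹⁾ is exactly the space of all alternating bilinear forms. -/
theorem statement13 {K V : Type*} [Field K] [AddCommGroup V] [Module K V]
    [FiniteDimensional K V] [CharP K 2] [PerfectField K]
    (B : V →ₗ[K] V →ₗ[K] K)
    (hsymm : ∀ u v : V, B u v = B v u)
    (hnd : ∀ v : V, (∀ w : V, B v w = 0) → v = 0)
    (hna : ∃ v : V, B v v ≠ 0) :
    ∀ C : V →ₗ[K] V →ₗ[K] K,
      (∃ A ∈ sAdjDerived B, ∀ u v : V, C u v = B (A u) v) ↔
        (∀ v : V, C v v = 0) := by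
  classical
  intro C
  constructor
  · rintro ⟨A, hA, hC⟩ v
    rw [hC]
    clear hC
    unfold sAdjDerived at hA
    induction hA using Submodule.span_induction with
    | mem x hx =>
      obtain ⟨A₁, h₁, A₂, h₂, rfl⟩ := hx
      have e1 := h₁ (A₂ v) v
      have e2 := h₂ (A₁ v) v
      simp only [LinearMap.sub_apply, Module.End.mul_apply, map_sub, e1, e2]
      rw [hsymm, sub_self]
    | zero => simp
    | add x y _ _ hx hy => simp [hx, hy]
    | smul a x _ hx => simp [hx]
  · intro hC
    have hB : LinearMap.BilinForm.Nondegenerate B :=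
      ⟨fun x h => hnd x h, fun x h => hnd x fun w => by rw [hsymm]; exact h w⟩
    let e := Module.finBasis K V
    let f := LinearMap.BilinForm.dualBasis B hB e
    have hf : ∀ i j, B (f i) (e j) = if j = i then 1 else 0 := fun i j =>
      LinearMap.BilinForm.apply_dualBasis_left hB e i j
    have hanti : ∀ u v, C u v = - C v u := by
      intro u v
      have := hC (u + v)
      simp only [map_add, LinearMap.add_apply, hC, zero_add, add_zero] at this
      linear_combination this
    refine ⟨∑ i, ∑ j, C (e i) (e j) • rk B (f i) (f j),
      aux_sum _ (fun i j => C (e i) (e j)) (fun i j => rk B (f i) (f j)) (fun i => hC _) (fun i j => hanti _ _)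
        (fun i j => rk_wedge B hsymm hnd _ _) _, ?_⟩
    intro u v
    refine LinearMap.congr_fun₂ (g := B ∘ₗ (∑ i, ∑ j, C (e i) (e j) • rk B (f i) (f j))) ?_ u v
    refine LinearMap.ext_basis e e fun k l => ?_
    simp [LinearMap.sum_apply, rk, hf]
end

section
/- Let U be a nonzero proper subspace of V, let l = codim_V U, r = dim(U ∩ U^⊥), and t = codim_{s(V,b)} N_{s(V,b)}(U). Then t = l(n − l) − r(r − 1)/2; equivalently, l + t − n = (l − 1)(n − l) − r(r − 1)/2. -/
open Module

/-- Endomorphisms of V leaving the subspace U stable. -/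
def stab {K V : Type*} [Field K] [AddCommGroup V] [Module K V]
    (U : Submodule K V) : Submodule K (Module.End K V) where
  carrier := {A | ∀ u ∈ U, A u ∈ U}
  add_mem' := by
    intro A C hA hC u hu
    simpa [LinearMap.add_apply] using U.add_mem (hA u hu) (hC u hu)
  zero_mem' := by
    intro u hu
    simp
  smul_mem' := by
    intro c A hA u hu
    simpa [LinearMap.smul_apply] using U.smul_mem c (hA u hu)

/-- The evaluation map `A ↦ ((u, w) ↦ B (A u) w)` on `U × W`. -/
def phiMap {K V : Type*} [Field K] [AddCommGroup V] [Module K V]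
    (B : V →ₗ[K] V →ₗ[K] K) (U W : Submodule K V) :
    Module.End K V →ₗ[K] (U →ₗ[K] W →ₗ[K] K) where
  toFun A := (B ∘ₗ A).domRestrict₁₂ U W
  map_add' A C := by ext u w; simp [LinearMap.domRestrict₁₂_apply]
  map_smul' c A := by ext u w; simp [LinearMap.domRestrict₁₂_apply]

/-- The antisymmetry defect along a family `e`. -/
def dMap {K V : Type*} [Field K] [AddCommGroup V] [Module K V]
    (U W : Submodule K V) (r : ℕ) (e : Fin r → ↥(U ⊓ W)) :
    (U →ₗ[K] W →ₗ[K] K) →ₗ[K] ((Σ j : Fin r, Fin j.val) → K) where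
  toFun g := fun s =>
    g ⟨e (Fin.castLE s.1.2.le s.2), (e _).2.1⟩ ⟨e s.1, (e _).2.2⟩
      - g ⟨e s.1, (e _).2.1⟩ ⟨e (Fin.castLE s.1.2.le s.2), (e _).2.2⟩
  map_add' g h := by ext s; simp; ring
  map_smul' c g := by ext s; simp; ring

lemma exists_proj {K V : Type*} [Field K] [AddCommGroup V] [Module K V]
    (U W : Submodule K V) (ρ : V →ₗ[K] ↥(U ⊓ W)) (hρ : ∀ x : ↥(U ⊓ W), ρ x = x) :
    ∃ P : V →ₗ[K] U, (∀ u : U, P u = u) ∧ ∀ w ∈ W, (P w : V) = ρ w := by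
  have hd : Disjoint (W ⊓ LinearMap.ker ρ) U := by
    rw [Submodule.disjoint_def]
    rintro x ⟨hx, hk⟩ hu
    have := hρ ⟨x, hu, hx⟩
    simp only [SetLike.mem_coe, LinearMap.mem_ker] at hk
    simpa [hk] using congrArg Subtype.val this.symm
  obtain ⟨C, hle, hC⟩ := hd.exists_isCompl
  refine ⟨U.projectionOnto C hC.symm, fun u => Submodule.projectionOnto_apply_left _ u, ?_⟩
  intro w hw
  have h1 : w - ρ w ∈ C := hle ⟨W.sub_mem hw (ρ w).2.2, by simp [hρ]⟩
  have h2 := (Submodule.projectionOnto_apply_eq_zero_iff hC.symm).2 h1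
  rw [map_sub, sub_eq_zero] at h2
  rw [h2]
  exact congrArg Subtype.val (Submodule.projectionOnto_apply_left hC.symm ⟨ρ w, (ρ w).2.1⟩)

lemma dMap_surj {K V : Type*} [Field K] [AddCommGroup V] [Module K V]
    (U W : Submodule K V) (r : ℕ) (e : Basis (Fin r) K ↥(U ⊓ W))
    (ρ : V →ₗ[K] ↥(U ⊓ W)) (hρ : ∀ x : ↥(U ⊓ W), ρ x = x) :
    Function.Surjective (dMap U W r e) := by
  intro f
  let g0 : ↥(U ⊓ W) →ₗ[K] ↥(U ⊓ W) →ₗ[K] K :=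
    e.constr K (fun i => e.constr K (fun j =>
      if h : i.val < j.val then f ⟨j, ⟨i.val, h⟩⟩ else 0))
  refine ⟨g0.compl₁₂ (ρ ∘ₗ U.subtype) (ρ ∘ₗ W.subtype), ?_⟩
  ext ⟨j, i⟩
  have hi := i.2
  have hb : ∀ i j : Fin r, g0 (e i) (e j) =
      if h : i.val < j.val then f ⟨j, ⟨i.val, h⟩⟩ else 0 := by
    intro i j
    simp only [g0, Basis.constr_basis]
  change g0 (ρ (e _)) (ρ (e _)) - g0 (ρ (e _)) (ρ (e _)) = _
  simp only [hρ]
  rw [hb, hb, dif_pos (by simp), dif_neg (by simp), sub_zero]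
  rfl

lemma ker_dMap {K V : Type*} [Field K] [AddCommGroup V] [Module K V]
    (U W : Submodule K V) (r : ℕ) (e : Basis (Fin r) K ↥(U ⊓ W))
    (g : U →ₗ[K] W →ₗ[K] K) :
    g ∈ LinearMap.ker (dMap U W r e) ↔
      ∀ x y : ↥(U ⊓ W), g ⟨x, x.2.1⟩ ⟨y, y.2.2⟩ = g ⟨y, y.2.1⟩ ⟨x, x.2.2⟩ := by
  constructor
  · intro h
    have hl : ∀ i j : Fin r, i < j →
        g ⟨e i, (e i).2.1⟩ ⟨e j, (e j).2.2⟩ = g ⟨e j, (e j).2.1⟩ ⟨e i, (e i).2.2⟩ := by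
      intro i j hij
      exact sub_eq_zero.1 (congrFun h ⟨j, ⟨i.val, hij⟩⟩)
    let g0 : ↥(U ⊓ W) →ₗ[K] ↥(U ⊓ W) →ₗ[K] K :=
      g.compl₁₂ (Submodule.inclusion inf_le_left) (Submodule.inclusion inf_le_right)
    have : g0 = g0.flip := by
      refine e.ext fun i => e.ext fun j => ?_
      rcases lt_trichotomy i j with h | h | h
      · exact hl i j h
      · rw [h]; rfl
      · exact (hl j i h).symm
    intro x y
    exact LinearMap.congr_fun₂ this x y
  · intro h
    ext s
    exact sub_eq_zero.2 (h _ _)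

lemma range_phi {K V : Type*} [Field K] [AddCommGroup V] [Module K V]
    [FiniteDimensional K V]
    (B : V →ₗ[K] V →ₗ[K] K)
    (hsymm : ∀ u v : V, B u v = B v u)
    (hnd : ∀ v : V, (∀ w : V, B v w = 0) → v = 0)
    (U W : Submodule K V) (r : ℕ) (e : Basis (Fin r) K ↥(U ⊓ W))
    (ρ : V →ₗ[K] ↥(U ⊓ W)) (hρ : ∀ x : ↥(U ⊓ W), ρ x = x) :
    LinearMap.range ((phiMap B U W).domRestrict (sAdj B)) = LinearMap.ker (dMap U W r e) := by
  ext g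
  rw [ker_dMap]
  constructor
  · rintro ⟨⟨A, hA⟩, rfl⟩ x y
    change B (A x) y = B (A y) x
    rw [hA, hsymm]
  · intro hg
    obtain ⟨P, hP, hPW⟩ := exists_proj U W ρ hρ
    obtain ⟨Q, hQ, hQU⟩ : ∃ Q : V →ₗ[K] W, (∀ u : W, Q u = u) ∧ ∀ w ∈ U, (Q w : V) = ρ w := by
      let σ : V →ₗ[K] ↥(W ⊓ U) := Submodule.inclusion (by rw [inf_comm]) ∘ₗ ρ
      obtain ⟨Q, h1, h2⟩ := exists_proj W U σ (by
        intro x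
        apply Subtype.ext
        have h := congrArg Subtype.val (hρ ⟨x, x.2.2, x.2.1⟩)
        exact h)
      exact ⟨Q, h1, h2⟩
    let a : V →ₗ[K] V →ₗ[K] K := g.compl₁₂ P Q
    let c : V →ₗ[K] V →ₗ[K] K :=
      g.compl₁₂ (Submodule.inclusion inf_le_left ∘ₗ ρ) (Submodule.inclusion inf_le_right ∘ₗ ρ)
    let β := a + a.flip - c
    have hc : ∀ v w, c v w = c w v := fun v w => hg (ρ v) (ρ w)
    have hβ : ∀ v w, β v w = β w v := by
      intro v w
      simp only [β, LinearMap.sub_apply, LinearMap.add_apply, LinearMap.flip_apply, hc v w]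
      ring
    have hinj : Function.Injective B := by
      rw [injective_iff_map_eq_zero]
      intro v hv
      exact hnd v fun w => by rw [hv]; rfl
    have hbij : Function.Bijective B :=
      ⟨hinj, (LinearMap.injective_iff_surjective_of_finrank_eq_finrank
        (Subspace.dual_finrank_eq (K := K) (V := V)).symm).1 hinj⟩
    let E := LinearEquiv.ofBijective B hbij
    let A : Module.End K V := E.symm.toLinearMap ∘ₗ β
    have hA : ∀ v, B (A v) = β v := fun v => E.apply_symm_apply (β v)
    refine ⟨⟨A, fun u v => ?_⟩, ?_⟩
    · rw [hA, hsymm u, hA, hβ]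
    · ext u w
      change B (A u) w = _
      rw [hA]
      have h1 : P w = ⟨ρ w, (ρ w).2.1⟩ := Subtype.ext (hPW w w.2)
      have h2 : Q u = ⟨ρ u, (ρ u).2.2⟩ := Subtype.ext (hQU u u.2)
      change g (P u) (Q w) + g (P w) (Q u) - c u w = _
      rw [hP, hQ, h1, h2, hc]
      change _ + c w u - c w u = _
      ring

/-- for a nonzero proper subspace U of V, with l = codim U,
r = dim(U ∩ U^⊥), n = dim V and t = codim of N_{s(V,b)}(U) in s(V,b),
t = l(n − l) − r(r − 1)/2. -/
theorem statement14 {K V : Type*} [Field K] [AddCommGroup V] [Module K V]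
    [FiniteDimensional K V] [CharP K 2] [PerfectField K]
    (B : V →ₗ[K] V →ₗ[K] K)
    (hsymm : ∀ u v : V, B u v = B v u)
    (hnd : ∀ v : V, (∀ w : V, B v w = 0) → v = 0)
    (hna : ∃ v : V, B v v ≠ 0)
    (U : Submodule K V) (hUbot : U ≠ ⊥) (hUtop : U ≠ ⊤)
    (n l r t : ℕ)
    (hn : n = finrank K V)
    (hl : l = finrank K V - finrank K ↥U)
    (hr : r = finrank K ↥(U ⊓ perp B U))
    (ht : t = finrank K ↥(sAdj B) - finrank K ↥(sAdj B ⊓ stab U)) :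
    t = l * (n - l) - r * (r - 1) / 2 := by
  have hrefl : LinearMap.BilinForm.IsRefl B := fun u v h => by rw [hsymm]; exact h
  have hnon : LinearMap.BilinForm.Nondegenerate B :=
    ⟨hnd, fun v h => hnd v fun w => by rw [hsymm]; exact h w⟩
  have hpo : ∀ L : Submodule K V, perp B L = LinearMap.BilinForm.orthogonal B L := by
    intro L
    ext v
    exact ⟨fun h w hw => by
      change B w v = 0
      rw [hsymm]; exact h w hw, fun h w hw => by rw [hsymm]; exact h w hw⟩
  have hpp : perp B (perp B U) = U := by
    rw [hpo, hpo, LinearMap.BilinForm.orthogonal_orthogonal hnon hrefl]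
  have hW : finrank K (perp B U) = l := by
    rw [hpo, LinearMap.BilinForm.finrank_orthogonal hnon, hl]
  set W := perp B U with hWdef
  let e : Basis (Fin r) K ↥(U ⊓ W) := finBasisOfFinrankEq K _ hr.symm
  obtain ⟨ρ, hρ'⟩ := (U ⊓ W).subtype.exists_leftInverse_of_injective (U ⊓ W).ker_subtype
  have hρ : ∀ x : ↥(U ⊓ W), ρ x = x := fun x => LinearMap.congr_fun hρ' x
  have hrange := range_phi B hsymm hnd U W r e ρ hρ
  have hker : LinearMap.ker ((phiMap B U W).domRestrict (sAdj B))
      = (stab U).comap (sAdj B).subtype := by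
    ext ⟨A, hA⟩
    constructor
    · intro h u hu
      change A u ∈ U
      rw [← hpp]
      intro w hw
      exact LinearMap.congr_fun₂ h ⟨u, hu⟩ ⟨w, hw⟩
    · intro h
      ext u w
      change B (A u) w = 0
      rw [hsymm]
      exact w.2 _ (h u u.2)
  have h1 := LinearMap.finrank_range_add_finrank_ker (K := K) (V := sAdj B)
    (V₂ := U →ₗ[K] W →ₗ[K] K) ((phiMap B U W).domRestrict (sAdj B))
  rw [hrange, hker, ← Submodule.finrank_map_subtype_eq, Submodule.map_comap_subtype] at h1
  have h2 := LinearMap.finrank_range_add_finrank_ker (K := K)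
    (V := U →ₗ[K] W →ₗ[K] K) (V₂ := (Σ j : Fin r, Fin j.val) → K) (dMap U W r e)
  rw [LinearMap.range_eq_top.2 (dMap_surj U W r e ρ hρ), finrank_top, finrank_linearMap,
    finrank_linearMap, finrank_self, hW, finrank_fintype_fun_eq_card, Fintype.card_sigma] at h2
  simp only [Fintype.card_fin] at h2
  rw [Fin.sum_univ_eq_sum_range (fun i => i) r, Finset.sum_range_id] at h2
  have hU : finrank K U ≤ finrank K V := Submodule.finrank_le U
  have h3 : n - l = finrank K U := by omega
  rw [h3, mul_comm l]
  simp only [mul_one] at h2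
  omega
end
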